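/- arXiv:2109.07209 — 4 statements merged into one kernel-verified Lean document; each statement's English description precedes it below -/
import Mathlib

section
/- For all integers n ≥ 0, α ≥ 0, β ≥ 0 and every j ∈ {0, 2, 3, 4}, the number of (4,8)-regular overpartitions satisfies p̄_{4,8}( 8 · 5^{2α+1} · 7^{2β} · (5n + j) + 7 · 5^{2α+1} · 7^{2β} ) ≡ 0 (mod 16). -/
/-- The number of `(j,k)`-regular overpartitions of `n`: pairs `(λ, μ)` where `λ` is a
partition of some `m ≤ n` into distinct parts, `μ` is a partition of `n - m`, and no part
of `λ` or `μ` is congruent to `j` modulo `k`. -/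
def regularOverpartitions (j k n : ℕ) : ℕ :=
  ∑ m ∈ Finset.range (n + 1),
    ((Nat.Partition.distincts m).filter (fun lam => ∀ i ∈ lam.parts, i % k ≠ j)).card *
    ((Finset.univ : Finset (Nat.Partition (n - m))).filter
      (fun mu => ∀ i ∈ mu.parts, i % k ≠ j)).card

/-!
Let `O_p` be the generating function of the overpartitions all of whose parts satisfy `p`, and write
`S = ∑_{r ≥ 1} (-1) ^ r X ^ (r ^ 2)`. Gauss's identity says `O_⊤ * (1 + 2 * S) = 1`, and Euler's
products give `O_p * O_{¬p} = O_⊤`. Suppose that only multiples of `4` violate `p`, and put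
`G = O_{¬p}`. Then `G ≡ 1 (mod 2)`, hence `G ^ 8 ≡ 1 (mod 16)`, and
`O_p ≡ O_⊤ * G ^ 7 ≡ G ^ 7 * (1 - 2 * S + 4 * S ^ 2) - 8 * S ^ 3 (mod 16)`.
All exponents of `G` are `0` modulo `4` and those of `S` are `0` or `1`, so at an exponent
`N ≡ 3 (mod 4)` only `8 * S ^ 3` survives. Finally `S ^ 3 ≡ S(X) * S(X ^ 2) (mod 2)`, which has no
term at `N` unless `N = x ^ 2 + 2 * y ^ 2`; and such an `N` has even `5`-adic valuation, because
`-2` is not a square modulo `5`.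
-/

section QuadraticForm

variable {p d : ℕ} [Fact p.Prime]

theorem dvd_and_dvd_of_dvd_sq_add_mul_sq (hd : ¬ IsSquare (-d : ZMod p)) {x y : ℕ}
    (h : p ∣ x ^ 2 + d * y ^ 2) : p ∣ x ∧ p ∣ y := by
  simp only [← ZMod.natCast_eq_zero_iff] at h ⊢
  push_cast at h
  have hy : (y : ZMod p) = 0 := by
    by_contra hy
    refine hd ⟨x / y, ?_⟩
    field_simp
    linear_combination -h
  refine ⟨?_, hy⟩
  simpa [hy] using h

theorem sq_add_mul_sq_ne_pow_mul (hd : ¬ IsSquare (-d : ZMod p)) {m : ℕ} (hm : ¬ p ∣ m)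
    (a x y : ℕ) : x ^ 2 + d * y ^ 2 ≠ p ^ (2 * a + 1) * m := by
  have hp : 0 < p := (Fact.out : p.Prime).pos
  induction a generalizing x y with
  | zero =>
    intro h
    have hdvd : p ∣ x ^ 2 + d * y ^ 2 := ⟨m, by rw [h]; ring⟩
    obtain ⟨⟨u, rfl⟩, v, rfl⟩ := dvd_and_dvd_of_dvd_sq_add_mul_sq hd hdvd
    refine hm ⟨u ^ 2 + d * v ^ 2, Nat.eq_of_mul_eq_mul_left hp ?_⟩
    linear_combination -h
  | succ a ih =>
    intro h
    have hdvd : p ∣ x ^ 2 + d * y ^ 2 := ⟨p ^ (2 * a + 2) * m, by rw [h]; ring⟩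
    obtain ⟨⟨u, rfl⟩, v, rfl⟩ := dvd_and_dvd_of_dvd_sq_add_mul_sq hd hdvd
    refine ih u v (Nat.eq_of_mul_eq_mul_left (pow_pos hp 2) ?_)
    linear_combination h

end QuadraticForm

section Shanks

variable {R : Type*} [CommRing R] (x : R)

/-- The `s`-th summand in Shanks's finite form `prod_mul_altSquareSum_eq_sum_shanksTerm` of Gauss's
identity. -/
def shanksTerm (n s : ℕ) : R :=
  (-1) ^ s * x ^ (s * (n + 1)) * (∏ i ∈ Finset.Ico s n, (1 - x ^ (i + 1))) *
    ∏ i ∈ Finset.range s, (1 + x ^ i)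

theorem shanksTerm_succ_left {n s : ℕ} (h : s ≤ n) :
    shanksTerm x (n + 1) s = x ^ s * (1 - x ^ (n + 1)) * shanksTerm x n s := by
  rw [shanksTerm, shanksTerm, Finset.prod_Ico_succ_top h]
  ring

theorem shanksTerm_succ_right_mul {n s : ℕ} (h : s < n) :
    shanksTerm x n (s + 1) * (1 - x ^ (s + 1)) =
      -x ^ (n + 1) * (1 + x ^ s) * shanksTerm x n s := by
  rw [shanksTerm, shanksTerm, Finset.prod_range_succ, Finset.prod_eq_prod_Ico_succ_bot h]
  ring

theorem shanksTerm_zero (n : ℕ) :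
    shanksTerm x n 0 = ∏ i ∈ Finset.range n, (1 - x ^ (i + 1)) := by
  simp [shanksTerm]

theorem prod_range_succ_one_add_pow (n : ℕ) :
    ∏ i ∈ Finset.range (n + 1), (1 + x ^ i) = 2 * ∏ i ∈ Finset.range n, (1 + x ^ (i + 1)) := by
  rw [Finset.prod_range_succ']
  ring

theorem shanksTerm_self_mul (n : ℕ) :
    shanksTerm x n n * (1 + x ^ n) =
      (-1) ^ n * x ^ (n * (n + 1)) * (2 * ∏ i ∈ Finset.range n, (1 + x ^ (i + 1))) := by
  rw [← prod_range_succ_one_add_pow, Finset.prod_range_succ, shanksTerm, Finset.Ico_self,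
    Finset.prod_empty]
  ring

theorem shanksTerm_succ_self (n : ℕ) :
    shanksTerm x (n + 1) (n + 1) =
      (-1) ^ (n + 1) * x ^ ((n + 1) * (n + 2)) *
        (2 * ∏ i ∈ Finset.range n, (1 + x ^ (i + 1))) := by
  rw [← prod_range_succ_one_add_pow, shanksTerm, Finset.Ico_self, Finset.prod_empty, mul_one]

theorem sum_shanksTerm_succ_sub {n k : ℕ} (h : k ≤ n) :
    ∑ s ∈ Finset.range (k + 1), (shanksTerm x (n + 1) s - (1 + x ^ (n + 1)) * shanksTerm x n s) =
      -x ^ (n + 1) * (shanksTerm x n k * (1 + x ^ k)) := by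
  induction k with
  | zero =>
    rw [Finset.sum_range_one, shanksTerm_succ_left x n.zero_le]
    ring
  | succ k ih =>
    rw [Finset.sum_range_succ, ih (by omega), shanksTerm_succ_left x h]
    linear_combination -shanksTerm_succ_right_mul x (Nat.lt_of_succ_le h)

theorem prod_mul_altSquareSum_eq_sum_shanksTerm (n : ℕ) :
    (∏ i ∈ Finset.range n, (1 + x ^ (i + 1))) *
      (1 + 2 * ∑ r ∈ Finset.range n, (-1) ^ (r + 1) * x ^ ((r + 1) ^ 2)) =
      ∑ s ∈ Finset.range (n + 1), shanksTerm x n s := by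
  induction n with
  | zero => simp [shanksTerm]
  | succ n ih =>
    have hstep := sum_shanksTerm_succ_sub x (le_refl n)
    rw [Finset.sum_sub_distrib, ← Finset.mul_sum, ← ih, shanksTerm_self_mul] at hstep
    rw [Finset.sum_range_succ (shanksTerm x (n + 1)), eq_add_of_sub_eq hstep, shanksTerm_succ_self,
      Finset.prod_range_succ, Finset.sum_range_succ]
    ring

theorem pow_succ_dvd_prod_mul_altSquareSum_sub (n : ℕ) :
    x ^ (n + 1) ∣ (∏ i ∈ Finset.range n, (1 + x ^ (i + 1))) *
      (1 + 2 * ∑ r ∈ Finset.range n, (-1) ^ (r + 1) * x ^ ((r + 1) ^ 2)) -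
        ∏ i ∈ Finset.range n, (1 - x ^ (i + 1)) := by
  rw [prod_mul_altSquareSum_eq_sum_shanksTerm, Finset.sum_range_succ', shanksTerm_zero,
    add_sub_cancel_right]
  refine Finset.dvd_sum fun s _ => ?_
  have hpow : x ^ (n + 1) ∣ x ^ ((s + 1) * (n + 1)) :=
    pow_dvd_pow x (Nat.le_mul_of_pos_left _ s.succ_pos)
  exact ((hpow.mul_left _).mul_right _).mul_right _

end Shanks

open PowerSeries PowerSeries.WithPiTopology Nat.Partition Finset Filter Topology

section PowerSeriesCoefficients

theorem natCast_dvd_iff_dvd_coeff {R : Type*} [Semiring R] {d : ℕ} {f : R⟦X⟧} :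
    (d : R⟦X⟧) ∣ f ↔ ∀ n, (d : R) ∣ coeff n f := by
  rw [← map_natCast (C (R := R))]
  constructor
  · rintro ⟨g, rfl⟩ n
    exact ⟨coeff n g, coeff_C_mul n g _⟩
  · intro h
    choose g hg using h
    refine ⟨mk g, PowerSeries.ext fun n => ?_⟩
    rw [coeff_C_mul, coeff_mk, hg]

theorem eq_of_tendsto_of_X_pow_dvd_sub {R : Type*} [CommRing R] [TopologicalSpace R] [T2Space R]
    {u : ℕ → R⟦X⟧} {f g : R⟦X⟧} (hu : Tendsto u atTop (𝓝 f)) (h : ∀ n, X ^ (n + 1) ∣ u n - g) :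
    f = g := by
  refine tendsto_nhds_unique hu ((tendsto_iff_coeff_tendsto R u atTop g).2 fun d => ?_)
  refine tendsto_atTop_of_eventually_const (i₀ := d) fun n hn => sub_eq_zero.1 ?_
  rw [← map_sub]
  exact X_pow_dvd_iff.1 (h n) d (Nat.lt_succ_of_le hn)

theorem pow_card_eq_expand (p : ℕ) [Fact p.Prime] (f : (ZMod p)⟦X⟧) :
    f ^ p = expand p (NeZero.ne p) f := by
  have h := MvPowerSeries.map_frobenius_expand p (NeZero.ne p) (f := f)
  rw [ZMod.frobenius_zmod, MvPowerSeries.map_id] at h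
  exact h.symm

theorem two_dvd_coeff_pow_three {f : ℤ⟦X⟧} {N : ℕ}
    (h : ∀ a b, coeff a f ≠ 0 → coeff b f ≠ 0 → a + 2 * b ≠ N) : 2 ∣ coeff N (f ^ 3) := by
  let g := f.map (Int.castRingHom (ZMod 2))
  have hg : ∀ n, coeff n g ≠ 0 → coeff n f ≠ 0 := fun n hn h0 => hn (by simp [g, h0])
  suffices coeff N (g ^ 3) = 0 by
    rw [← map_pow, coeff_map] at this
    exact (ZMod.intCast_zmod_eq_zero_iff_dvd _ 2).1 this
  rw [pow_succ', pow_card_eq_expand 2, coeff_mul]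
  refine sum_eq_zero fun ⟨a, c⟩ hac => ?_
  by_contra hne
  obtain ⟨b, rfl⟩ : 2 ∣ c := by
    by_contra hc
    exact right_ne_zero_of_mul hne (coeff_expand_of_not_dvd 2 _ g hc)
  rw [coeff_expand_mul] at hne
  exact h a b (hg a (left_ne_zero_of_mul hne)) (hg b (right_ne_zero_of_mul hne))
    (mem_antidiagonal.1 hac)

end PowerSeriesCoefficients

section ResidueBounded

variable {R : Type*} [Semiring R] {m r s : ℕ} {f g : R⟦X⟧}

/-- Every exponent occurring in `f` has residue at most `r` modulo `m`. Residues are subadditive, so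
these bounds add up under multiplication. -/
def ResidueBounded (m r : ℕ) (f : R⟦X⟧) : Prop :=
  ∀ n, coeff n f ≠ 0 → n % m ≤ r

theorem ResidueBounded.mul (hf : ResidueBounded m r f) (hg : ResidueBounded m s g) :
    ResidueBounded m (r + s) (f * g) := by
  intro n hn
  rw [coeff_mul] at hn
  obtain ⟨⟨a, b⟩, hab, hne⟩ := exists_ne_zero_of_sum_ne_zero hn
  calc n % m = (a % m + b % m) % m := by rw [← mem_antidiagonal.1 hab, Nat.add_mod]
    _ ≤ a % m + b % m := Nat.mod_le _ _
    _ ≤ r + s := add_le_add (hf a (left_ne_zero_of_mul hne)) (hg b (right_ne_zero_of_mul hne))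

theorem ResidueBounded.pow (hf : ResidueBounded m r f) (k : ℕ) :
    ResidueBounded m (k * r) (f ^ k) := by
  induction k with
  | zero =>
    intro n hn
    have hn0 : n = 0 := by
      by_contra h
      exact hn (by rw [pow_zero, coeff_one, if_neg h])
    simp [hn0]
  | succ k ih =>
    rw [pow_succ, add_one_mul]
    exact ih.mul hf

end ResidueBounded

section AltSquareSeries

variable (R : Type*) [Ring R]

/-- The series `S = ∑_{r ≥ 1} (-1) ^ r X ^ (r ^ 2)`, so that `1 + 2 * S` is Ramanujan's `φ(-X)`. The
sign is read off the exponent, as `r ^ 2` and `r` have the same parity. -/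
def altSquareSeries : R⟦X⟧ :=
  mk fun n => if n ≠ 0 ∧ IsSquare n then (-1) ^ n else 0

variable {R}

theorem exists_sq_eq_of_coeff_altSquareSeries_ne_zero {n : ℕ}
    (h : coeff n (altSquareSeries R) ≠ 0) : ∃ r, r ^ 2 = n := by
  rw [altSquareSeries, coeff_mk] at h
  obtain ⟨r, hr⟩ := (ite_ne_right_iff.1 h).1.2
  exact ⟨r, by rw [hr, sq]⟩

theorem residueBounded_altSquareSeries : ResidueBounded 4 1 (altSquareSeries R) := by
  intro n hn
  obtain ⟨r, rfl⟩ := exists_sq_eq_of_coeff_altSquareSeries_ne_zero hn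
  rcases Nat.even_or_odd' r with ⟨c, rfl | rfl⟩ <;> ring_nf <;> omega

theorem hasSum_altSquareSeries [TopologicalSpace R] :
    HasSum (fun r : ℕ => (-1) ^ (r + 1) * (X : R⟦X⟧) ^ ((r + 1) ^ 2)) (altSquareSeries R) := by
  have hinj : Function.Injective fun r : ℕ => (r + 1) ^ 2 := fun a b h => by
    simpa using Nat.pow_left_injective two_ne_zero h
  have hzero : ∀ n ∉ Set.range fun r : ℕ => (r + 1) ^ 2,
      monomial n (coeff n (altSquareSeries R)) = 0 := by
    intro n hn
    rw [altSquareSeries, coeff_mk, if_neg, map_zero]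
    rintro ⟨hn0, r, rfl⟩
    obtain ⟨t, rfl⟩ := Nat.exists_eq_succ_of_ne_zero (left_ne_zero_of_mul hn0)
    exact hn ⟨t, sq _⟩
  convert (hinj.hasSum_iff hzero).2 (hasSum_of_monomials_self (altSquareSeries R)) using 2 with r
  have hsign : (-1 : R) ^ ((r + 1) ^ 2) = (-1) ^ (r + 1) := by
    rw [neg_one_pow_congr]
    simp [Nat.even_pow]
  simp [altSquareSeries, monomial_eq_C_mul_X_pow, hsign, IsSquare.sq (r + 1)]

end AltSquareSeries

section OverpartitionSeries

variable (R : Type*) [CommSemiring R] (p : ℕ → Prop) [DecidablePred p]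

/-- The generating function of the overpartitions all of whose parts, overlined or not, satisfy
`p`. -/
noncomputable def overpartitionSeries : R⟦X⟧ :=
  (mk fun n => (#(distincts n ∩ restricted n p) : R)) * mk fun n => (#(restricted n p) : R)

theorem coeff_overpartitionSeries_mod_ne (j k n : ℕ) :
    coeff n (overpartitionSeries R fun i => i % k ≠ j) = regularOverpartitions j k n := by
  simp [overpartitionSeries, coeff_mul, Finset.Nat.sum_antidiagonal_eq_sum_range_succ_mk,
    regularOverpartitions, restricted, inter_filter]

variable {R}

theorem map_overpartitionSeries {T : Type*} [CommSemiring T] (φ : R →+* T) :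
    (overpartitionSeries R p).map φ = overpartitionSeries T p := by
  rw [overpartitionSeries, overpartitionSeries, map_mul]
  congr 1 <;> exact PowerSeries.ext fun n => by simp

variable {p}

theorem dvd_of_restricted_nonempty {m n : ℕ} (hp : ∀ i, p i → m ∣ i)
    (h : (restricted n p).Nonempty) : m ∣ n := by
  obtain ⟨lam, hlam⟩ := h
  rw [restricted, mem_filter_univ] at hlam
  exact lam.parts_sum ▸ Multiset.dvd_sum fun i hi => hp i (hlam i hi)

theorem residueBounded_overpartitionSeries {m : ℕ} (hp : ∀ i, p i → m ∣ i) :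
    ResidueBounded m 0 (overpartitionSeries R p) := by
  have of_card {A : (n : ℕ) → Finset n.Partition} (hA : ∀ n, A n ⊆ restricted n p) :
      ResidueBounded m 0 (mk fun n => (#(A n) : R)) := by
    intro n hn
    have hcard : #(A n) ≠ 0 := fun h => hn (by rw [coeff_mk, h, Nat.cast_zero])
    have hne := (card_ne_zero.1 hcard).mono (hA n)
    exact (Nat.mod_eq_zero_of_dvd (dvd_of_restricted_nonempty hp hne)).le
  exact (of_card fun n => inter_subset_right).mul (of_card fun n => Subset.rfl)

section Topology

variable [TopologicalSpace R] [T2Space R]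

variable (R p) in
theorem hasProd_card_distincts_inter_restricted :
    HasProd (fun i => if p (i + 1) then 1 + (X : R⟦X⟧) ^ (i + 1) else 1)
      (mk fun n => (#(distincts n ∩ restricted n p) : R)) := by
  convert! hasProd_genFun (fun i c => if c < 2 ∧ p i then (1 : R) else 0) using 1
  · ext1 i
    rw [tsum_eq_single 0 fun c hc => by simp [hc]]
    split_ifs <;> simp_all
  · ext n
    simp_rw [coeff_genFun, coeff_mk, ← countRestricted_two, countRestricted, restricted,
      ← filter_and, card_filter, Finsupp.prod, prod_boole]
    simp [forall_and]

variable (R p) in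
theorem hasProd_overpartitionSeries [IsTopologicalSemiring R] :
    HasProd (fun i => if p (i + 1) then (1 + (X : R⟦X⟧) ^ (i + 1)) * ∑' j, (X ^ (i + 1)) ^ j else 1)
      (overpartitionSeries R p) := by
  rw [overpartitionSeries]
  convert (hasProd_card_distincts_inter_restricted R p).mul
    (hasProd_powerSeriesMk_card_restricted R p) using 2 with i
  split_ifs <;> simp [pow_mul]

end Topology

variable (R p) in
theorem overpartitionSeries_mul_not :
    overpartitionSeries R p * overpartitionSeries R (fun i => ¬ p i) =
      overpartitionSeries R fun _ => True := by
  let _ : TopologicalSpace R := ⊥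
  have _ : DiscreteTopology R := ⟨rfl⟩
  refine ((hasProd_overpartitionSeries R p).mul
    (hasProd_overpartitionSeries R fun i => ¬ p i)).unique ?_
  convert hasProd_overpartitionSeries R fun _ => True using 2 with i
  split_ifs <;> simp_all

end OverpartitionSeries

section OverpartitionSeriesRing

variable {R : Type*} [CommRing R] {p : ℕ → Prop} [DecidablePred p]

theorem one_sub_X_pow_mul_tsum [TopologicalSpace R] [T2Space R] [IsTopologicalRing R] (i : ℕ) :
    (1 - (X : R⟦X⟧) ^ (i + 1)) * ∑' j, (X ^ (i + 1)) ^ j = 1 :=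
  one_sub_mul_tsum_pow_of_constantCoeff_eq_zero (by simp)

variable (R) in
theorem overpartitionSeries_true_mul_one_add_two_mul_altSquareSeries :
    overpartitionSeries R (fun _ => True) * (1 + 2 * altSquareSeries R) = 1 := by
  let _ : TopologicalSpace R := ⊥
  have _ : DiscreteTopology R := ⟨rfl⟩
  have hprod := (hasProd_overpartitionSeries R fun _ => True).tendsto_prod_nat
  have hsum := (hasSum_altSquareSeries (R := R)).tendsto_sum_nat
  refine eq_of_tendsto_of_X_pow_dvd_sub (hprod.mul ((hsum.const_mul 2).const_add 1)) fun n => ?_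
  have hinv : (∏ i ∈ range n, (1 - (X : R⟦X⟧) ^ (i + 1))) *
      ∏ i ∈ range n, ∑' j, (X ^ (i + 1)) ^ j = 1 := by
    rw [← prod_mul_distrib]
    exact prod_eq_one fun i _ => one_sub_X_pow_mul_tsum i
  convert (pow_succ_dvd_prod_mul_altSquareSum_sub (X : R⟦X⟧) n).mul_right
    (∏ i ∈ range n, ∑' j, (X ^ (i + 1)) ^ j) using 1
  simp only [if_true, prod_mul_distrib]
  linear_combination hinv

theorem overpartitionSeries_eq_one_of_charTwo [CharP R 2] : overpartitionSeries R p = 1 := by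
  let _ : TopologicalSpace R := ⊥
  have _ : DiscreteTopology R := ⟨rfl⟩
  have _ : CharP R⟦X⟧ 2 := charP_of_injective_ringHom (C_injective (R := R)) 2
  refine (hasProd_overpartitionSeries R p).unique ?_
  convert hasProd_one with i
  rw [← CharTwo.sub_eq_add, one_sub_X_pow_mul_tsum, ite_self]

variable (p) in
theorem two_dvd_overpartitionSeries_sub_one : (2 : ℤ⟦X⟧) ∣ overpartitionSeries ℤ p - 1 := by
  have hmap : (overpartitionSeries ℤ p).map (Int.castRingHom (ZMod 2)) = 1 := by
    rw [map_overpartitionSeries, overpartitionSeries_eq_one_of_charTwo]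
  refine natCast_dvd_iff_dvd_coeff.2 fun n => (ZMod.intCast_zmod_eq_zero_iff_dvd _ 2).1 ?_
  rw [← eq_intCast (Int.castRingHom (ZMod 2)), ← coeff_map, map_sub, hmap, map_one, sub_self,
    map_zero]

end OverpartitionSeriesRing

theorem sixteen_dvd_sub_of_mul_mul_one_add_two_mul_eq_one {A : Type*} [CommRing A] {P G S : A}
    (hPGS : P * G * (1 + 2 * S) = 1) (hG : 2 ∣ G - 1) :
    16 ∣ P - (G ^ 7 - 2 • (G ^ 7 * S) + 4 • (G ^ 7 * S ^ 2) - 8 • S ^ 3) := by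
  obtain ⟨b, hb⟩ : 2 ∣ G ^ 7 - 1 := hG.trans (sub_one_dvd_pow_sub_one G 7)
  obtain ⟨a, ha⟩ : 16 ∣ G ^ 8 - 1 := by
    have h := dvd_sub_pow_of_dvd_sub (p := 2) (by exact_mod_cast hG) 3
    norm_num at h
    exact h
  refine ⟨P * G ^ 8 * S ^ 4 - P * a - S ^ 3 * b, ?_⟩
  simp only [nsmul_eq_mul]
  push_cast
  linear_combination (G ^ 7 * (1 - 2 * S + 4 * S ^ 2 - 8 * S ^ 3)) * hPGS - P * ha
    - 8 * S ^ 3 * hb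

theorem sixteen_dvd_coeff_overpartitionSeries {p : ℕ → Prop} [DecidablePred p]
    (hp : ∀ i, ¬ p i → 4 ∣ i) {N : ℕ} (hN : N % 4 = 3) (hrep : ∀ x y, x ^ 2 + 2 * y ^ 2 ≠ N) :
    16 ∣ coeff N (overpartitionSeries ℤ p) := by
  let S := altSquareSeries ℤ
  let G := overpartitionSeries ℤ fun i => ¬ p i
  have hPGS : overpartitionSeries ℤ p * G * (1 + 2 * S) = 1 := by
    rw [overpartitionSeries_mul_not, overpartitionSeries_true_mul_one_add_two_mul_altSquareSeries]
  have hmod := natCast_dvd_iff_dvd_coeff (d := 16).1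
    (sixteen_dvd_sub_of_mul_mul_one_add_two_mul_eq_one hPGS
      (two_dvd_overpartitionSeries_sub_one _)) N
  have hlow : ∀ k < 3, coeff N (G ^ 7 * S ^ k) = 0 := by
    intro k hk
    by_contra hne
    have := ((residueBounded_overpartitionSeries hp).pow 7).mul
      (residueBounded_altSquareSeries.pow k) N hne
    omega
  have hcube : 2 ∣ coeff N (S ^ 3) := by
    refine two_dvd_coeff_pow_three fun a b ha hb => ?_
    obtain ⟨x, rfl⟩ := exists_sq_eq_of_coeff_altSquareSeries_ne_zero ha
    obtain ⟨y, rfl⟩ := exists_sq_eq_of_coeff_altSquareSeries_ne_zero hb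
    exact hrep x y
  have h0 := hlow 0 (by norm_num)
  have h1 := hlow 1 (by norm_num)
  have h2 := hlow 2 (by norm_num)
  rw [pow_zero, mul_one] at h0
  rw [pow_one] at h1
  simp only [map_sub, map_add, map_nsmul, h0, h1, h2, Int.nsmul_eq_mul] at hmod
  omega

theorem eight_mul_add_seven_mul_mod_four (a b c : ℕ) :
    (8 * 5 ^ a * 7 ^ (2 * b) * c + 7 * 5 ^ a * 7 ^ (2 * b)) % 4 = 3 := by
  have h5 : 5 ^ a % 4 = 1 := by simp [Nat.pow_mod]
  have h7 : 7 ^ (2 * b) % 4 = 1 := by simp [pow_mul, Nat.pow_mod]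
  have h8 : 8 * 5 ^ a * 7 ^ (2 * b) * c % 4 = 0 := by simp [Nat.mul_mod]
  simp [Nat.add_mod, Nat.mul_mod, h5, h7, h8]

theorem sq_add_two_mul_sq_ne_eight_mul_add_seven_mul {n j : ℕ}
    (hj : j ∈ ({0, 2, 3, 4} : Finset ℕ)) (α β x y : ℕ) :
    x ^ 2 + 2 * y ^ 2 ≠ 8 * 5 ^ (2 * α + 1) * 7 ^ (2 * β) * (5 * n + j)
      + 7 * 5 ^ (2 * α + 1) * 7 ^ (2 * β) := by
  have hlin : ¬ 5 ∣ 8 * (5 * n + j) + 7 := by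
    simp only [mem_insert, mem_singleton] at hj
    omega
  have hcofactor : ¬ 5 ∣ 7 ^ (2 * β) * (8 * (5 * n + j) + 7) :=
    Nat.prime_five.not_dvd_mul (mt Nat.prime_five.dvd_of_dvd_pow (by norm_num)) hlin
  have hsquare : ¬ IsSquare (-(2 : ℕ) : ZMod 5) := by decide
  have : Fact (Nat.Prime 5) := ⟨Nat.prime_five⟩
  convert sq_add_mul_sq_ne_pow_mul hsquare hcofactor α x y using 1
  ring

theorem stmt_14_general {j k N : ℕ} (hj : 4 ∣ j) (hk : 4 ∣ k) (hN : N % 4 = 3)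
    (hrep : ∀ x y, x ^ 2 + 2 * y ^ 2 ≠ N) : 16 ∣ regularOverpartitions j k N := by
  have hdvd : ∀ i, ¬ i % k ≠ j → 4 ∣ i := fun i hi =>
    (Nat.dvd_mod_iff hk).1 (not_not.1 hi ▸ hj)
  have h := sixteen_dvd_coeff_overpartitionSeries hdvd hN hrep
  rw [coeff_overpartitionSeries_mod_ne] at h
  exact_mod_cast h

theorem stmt_14 (n α β : ℕ) (j : ℕ) (hj : j ∈ ({0, 2, 3, 4} : Finset ℕ)) :
    16 ∣ regularOverpartitions 4 8
        (8 * 5 ^ (2 * α + 1) * 7 ^ (2 * β) * (5 * n + j)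
          + 7 * 5 ^ (2 * α + 1) * 7 ^ (2 * β)) :=
  stmt_14_general dvd_rfl (by norm_num) (eight_mul_add_seven_mul_mod_four _ _ _)
    (sq_add_two_mul_sq_ne_eight_mul_add_seven_mul hj α β)
end

section
/- For all integers n ≥ 0, α ≥ 0, β ≥ 0 and every k ∈ {0, 1, 3, 4, 5, 6}, the number of (4,8)-regular overpartitions satisfies p̄_{4,8}( 8 · 5^{2α} · 7^{2β+1} · (7n + k) + 5 · 5^{2α} · 7^{2β+1} ) ≡ 0 (mod 16). -/
/-!
Let `F` be the generating function of the `(k, 2k)`-regular overpartitions and `φ`, `ψ` Ramanujan's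
theta functions. Gauss's product `φ(-q) = ∏ (1 - q ^ i) / (1 + q ^ i)` gives
`F(q) * φ(-q) * φ(-q ^ (2k)) = φ(-q ^ k)`. Put `a = φ(q ^ 4)` and `b = q * ψ(q ^ 8)`. Then
`φ(-q) = a - 2 * b`, and modulo `16`
`(a - 2 * b) * (a ^ 3 + 2 * a ^ 2 * b + 4 * a * b ^ 2 + 8 * b ^ 3) = a ^ 4`.
If `4 ∣ k`, all remaining factors are series in `q ^ 4`, so the exponents congruent to `3` modulo
`4` come from the term `8 * b ^ 3` alone. As `φ(q)` is `1` and `ψ(q) ^ 2` is `ψ(q ^ 2)` modulo `2`,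
the coefficient of `q ^ (4 * m + 3)` in `F` is that of `q ^ m` in `8 * ψ(q ^ 2) * ψ(q ^ 4)`, which
vanishes unless `4 * m + 3 = x ^ 2 + 2 * y ^ 2`. No such representation exists when a prime `p`
modulo which `-2` is not a square divides `4 * m + 3` to an odd power.
-/

namespace RegularOverpartition

open Finset PowerSeries
open scoped PowerSeries.WithPiTopology

/-! ### Gauss's product for `φ(-q)` -/

-- Finite form of Gauss's identity, after Shanks: when `n` grows by one, each summand changes by a
-- multiple of `t (s + 1) - t s` for a fixed sequence `t`, so the sum gains a single boundary term.
theorem sum_mul_prod_Ico_eq_one_add_two_mul_sum_pow_sq {R : Type*} [CommRing R] (q : R) (r : ℕ → R)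
    (hr : ∀ i, r i * (1 + q ^ i) = 1 - q ^ i) (hr₀ : r 0 = 0) (n : ℕ) :
    ∑ s ∈ range (n + 1), (-1) ^ s * q ^ (s * (n + 1)) * (1 + r s) * ∏ i ∈ Ico s n, r (i + 1) =
      1 + 2 * ∑ k ∈ range n, (-1) ^ (k + 1) * q ^ (k + 1) ^ 2 := by
  induction n with
  | zero => simp [hr₀]
  | succ n ih =>
    let t (s : ℕ) : R := (-1) ^ s * q ^ (s * (n + 1)) * ∏ i ∈ Ico s (n + 1), r i
    have increment_eq_telescope (s : ℕ) (hs : s ∈ range (n + 1)) :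
        (-1) ^ s * q ^ (s * (n + 1 + 1)) * (1 + r s) * ∏ i ∈ Ico s (n + 1), r (i + 1) =
          (-1) ^ s * q ^ (s * (n + 1)) * (1 + r s) * ∏ i ∈ Ico s n, r (i + 1) +
            (1 + r (n + 1)) * (t (s + 1) - t s) := by
      have hsn : s ≤ n := Nat.lt_succ_iff.mp (mem_range.mp hs)
      simp only [t]
      rw [prod_Ico_succ_top hsn, prod_eq_prod_Ico_succ_bot (Nat.lt_succ_of_le hsn),
        ← prod_Ico_add' r s n 1]
      linear_combination (-1) ^ s * q ^ (s * (n + 1)) * (∏ i ∈ Ico s n, r (i + 1)) *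
        (r (n + 1) * hr s + hr (n + 1))
    have t_zero : t 0 = 0 := by simp [t, prod_range_succ', hr₀]
    have t_last : t (n + 1) = (-1) ^ (n + 1) * q ^ (n + 1) ^ 2 := by simp [t, sq]
    rw [sum_range_succ, sum_congr rfl increment_eq_telescope, sum_add_distrib, ih, ← mul_sum,
      sum_range_sub, t_zero, t_last, Ico_self, prod_empty, sum_range_succ]
    linear_combination (-1) ^ (n + 1) * q ^ (n + 1) ^ 2 * hr (n + 1)

variable (R : Type*) [CommRing R]

/-- Ramanujan's theta function `φ(q) = ∑ q ^ (x ^ 2)`, the sum over all integers `x`, so that every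
nonzero square gets coefficient `2`. Since `x ^ 2` and `x` have the same parity,
`rescale (-1) (ramanujanPhi R)` is `φ(-q) = ∑ (-1) ^ x * q ^ (x ^ 2)`. -/
noncomputable def ramanujanPhi : R⟦X⟧ :=
  mk fun n ↦ if n = 0 then 1 else if IsSquare n then 2 else 0

/-- Ramanujan's theta function `ψ(q) = ∑ q ^ (x * (x + 1) / 2)` over natural numbers `x`; the
triangular numbers are encoded as those `n` for which `8 * n + 1` is a square. -/
noncomputable def ramanujanPsi : R⟦X⟧ :=
  mk fun n ↦ if IsSquare (8 * n + 1) then 1 else 0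

theorem constantCoeff_ramanujanPhi : constantCoeff (ramanujanPhi R) = 1 := by
  simp [ramanujanPhi, ← coeff_zero_eq_constantCoeff_apply]

theorem constantCoeff_rescale_ramanujanPhi (a : R) :
    constantCoeff (rescale a (ramanujanPhi R)) = 1 := by
  simp [ramanujanPhi, ← coeff_zero_eq_constantCoeff_apply]

theorem coeff_one_add_two_mul_sum_X_pow_sq {m n : ℕ} (hmn : m ≤ n) :
    coeff m (1 + 2 * ∑ k ∈ range n, (-1) ^ (k + 1) * X ^ (k + 1) ^ 2 : R⟦X⟧) =
      coeff m (rescale (-1) (ramanujanPhi R)) := by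
  have coeff_term (k : ℕ) : coeff m ((-1) ^ (k + 1) * X ^ (k + 1) ^ 2 : R⟦X⟧) =
      if m = (k + 1) ^ 2 then (-1) ^ m else 0 := by
    have neg_one_pow_eq_C : (-1 : R⟦X⟧) ^ (k + 1) = C ((-1) ^ (k + 1)) := by simp
    rw [neg_one_pow_eq_C, coeff_C_mul, coeff_X_pow, mul_ite, mul_one, mul_zero]
    split_ifs with h
    · exact neg_one_pow_congr (by rw [h, Nat.even_pow' two_ne_zero])
    · rfl
  rw [coeff_rescale, ramanujanPhi, coeff_mk, map_add, two_mul, map_add, map_sum]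
  simp only [coeff_term]
  rcases eq_or_ne m 0 with rfl | hm
  · simp [eq_comm (a := 0)]
  rw [if_neg hm, coeff_one, if_neg hm, zero_add]
  split_ifs with hsq
  · obtain ⟨j, rfl⟩ := isSquare_iff_exists_sq m |>.mp hsq
    have hj : j ≠ 0 := by rintro rfl; exact hm rfl
    have hjn : j - 1 ∈ range n := mem_range.mpr (by have := Nat.le_self_pow two_ne_zero j; omega)
    rw [sum_eq_single_of_mem _ hjn, Nat.sub_one_add_one hj, if_pos rfl, mul_two]
    intro k _ hk
    exact if_neg fun h ↦ hk (by have := Nat.pow_left_injective two_ne_zero h; omega)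
  · rw [sum_eq_zero fun k _ ↦ if_neg fun h : m = (k + 1) ^ 2 ↦ hsq (h ▸ IsSquare.sq _)]
    simp

/-- The `i`-th factor `(1 - q ^ i) / (1 + q ^ i)` of Gauss's product for `φ(-q)`. For `i = 0`,
where `1 + q ^ i = 2` need not be invertible, the value is `0`. -/
noncomputable def gaussFactor (i : ℕ) : R⟦X⟧ := (1 - X ^ i) * invOfUnit (1 + X ^ i) 1

theorem gaussFactor_zero : gaussFactor R 0 = 0 := by simp [gaussFactor]

theorem gaussFactor_mul_one_add_X_pow (i : ℕ) :
    gaussFactor R i * (1 + X ^ i) = 1 - X ^ i := by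
  rcases eq_or_ne i 0 with rfl | hi
  · simp [gaussFactor]
  · rw [gaussFactor, mul_assoc, invOfUnit_mul _ _ (by simp [hi]), mul_one]

theorem isUnit_one_add_X_pow {i : ℕ} (hi : i ≠ 0) : IsUnit (1 + X ^ i : R⟦X⟧) :=
  isUnit_iff_constantCoeff.mpr (by simp [hi])

theorem expand_gaussFactor {d : ℕ} (hd : d ≠ 0) (i : ℕ) :
    expand d hd (gaussFactor R i) = gaussFactor R (d * i) := by
  rcases eq_or_ne i 0 with rfl | hi
  · simp [gaussFactor_zero]
  · apply (isUnit_one_add_X_pow R (mul_ne_zero hd hi)).mul_right_cancel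
    rw [gaussFactor_mul_one_add_X_pow]
    simpa [← pow_mul] using congrArg (expand d hd) (gaussFactor_mul_one_add_X_pow R i)

theorem X_pow_dvd_gaussFactor_sub_one (i : ℕ) : X ^ i ∣ gaussFactor R i - 1 :=
  ⟨-(gaussFactor R i + 1), by linear_combination gaussFactor_mul_one_add_X_pow R i⟩

theorem coeff_prod_gaussFactor {m n : ℕ} (hmn : m ≤ n) :
    coeff m (∏ i ∈ range n, gaussFactor R (i + 1)) = coeff m (rescale (-1) (ramanujanPhi R)) := by
  have gauss := sum_mul_prod_Ico_eq_one_add_two_mul_sum_pow_sq X (gaussFactor R)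
    (gaussFactor_mul_one_add_X_pow R) (gaussFactor_zero R) n
  have coeff_tail (s : ℕ) : coeff m ((-1) ^ (s + 1) * X ^ ((s + 1) * (n + 1)) *
      (1 + gaussFactor R (s + 1)) * ∏ i ∈ Ico (s + 1) n, gaussFactor R (i + 1)) = 0 := by
    have X_pow_dvd : (X ^ (n + 1) : R⟦X⟧) ∣ X ^ ((s + 1) * (n + 1)) :=
      pow_dvd_pow X (Nat.le_mul_of_pos_left _ s.succ_pos)
    exact X_pow_dvd_iff.mp (((X_pow_dvd.mul_left _).mul_right _).mul_right _) m
      (Nat.lt_succ_of_le hmn)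
  rw [← coeff_one_add_two_mul_sum_X_pow_sq R hmn, ← gauss, sum_range_succ', map_add, map_sum,
    sum_eq_zero fun s _ ↦ coeff_tail s]
  simp [gaussFactor_zero]

section
variable [TopologicalSpace R]

theorem multipliable_gaussFactor : Multipliable fun i ↦ gaussFactor R (i + 1) := by
  have h : Multipliable fun i ↦ 1 + (gaussFactor R (i + 1) - 1) := by
    apply WithPiTopology.multipliable_one_add_of_tendsto_order_atTop_nhds_top
    refine ENat.tendsto_nhds_top_iff_natCast_lt.mpr fun n ↦ ?_
    filter_upwards [Filter.eventually_ge_atTop n] with i hi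
    exact lt_of_lt_of_le (Nat.cast_lt.mpr (Nat.lt_succ_of_le hi))
      (nat_le_order _ _ (X_pow_dvd_iff.mp (X_pow_dvd_gaussFactor_sub_one R (i + 1))))
  simpa only [add_sub_cancel] using h

theorem continuous_expand {d : ℕ} (hd : d ≠ 0) : Continuous (expand d hd : R⟦X⟧ → R⟦X⟧) := by
  refine continuous_iff_continuousAt.mpr fun f ↦ ?_
  refine (WithPiTopology.tendsto_iff_coeff_tendsto R _ _ _).mpr fun n ↦ ?_
  simp only [coeff_expand]
  split_ifs
  · exact (WithPiTopology.continuous_coeff R _).continuousAt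
  · exact tendsto_const_nhds

variable [T2Space R]

theorem hasProd_gaussFactor :
    HasProd (fun i ↦ gaussFactor R (i + 1)) (rescale (-1) (ramanujanPhi R)) := by
  rw [(multipliable_gaussFactor R).hasProd_iff_tendsto_nat,
    WithPiTopology.tendsto_iff_coeff_tendsto]
  intro m
  refine tendsto_const_nhds.congr' ?_
  filter_upwards [Filter.eventually_ge_atTop m] with n hmn
  exact (coeff_prod_gaussFactor R hmn).symm

theorem hasProd_ite_dvd_gaussFactor {d : ℕ} (hd : d ≠ 0) :
    HasProd (fun i ↦ if d ∣ i + 1 then gaussFactor R (i + 1) else 1)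
      (expand d hd (rescale (-1) (ramanujanPhi R))) := by
  have hpos (i : ℕ) : 0 < d * (i + 1) := by positivity
  have pred_injective : Function.Injective fun i ↦ d * (i + 1) - 1 := fun i j hij ↦ by
    have h : d * (i + 1) = d * (j + 1) := by have := hpos i; have := hpos j; grind
    simpa [hd] using h
  rw [← pred_injective.hasProd_iff]
  · convert! (hasProd_gaussFactor R).map (expand d hd) (continuous_expand R hd) using 1
    ext1 i
    simp [expand_gaussFactor, Nat.sub_add_cancel (hpos i)]
  · rintro x hx
    refine if_neg ?_
    rintro ⟨c, hc⟩
    obtain ⟨i, rfl⟩ : ∃ i, c = i + 1 := Nat.exists_eq_succ_of_ne_zero (by rintro rfl; simp at hc)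
    exact hx ⟨i, by simp [← hc]⟩

theorem hasProd_powerSeriesMk_card_filter_distincts (p : ℕ → Prop) [DecidablePred p] :
    HasProd (fun i ↦ if p (i + 1) then 1 + X ^ (i + 1) else 1)
      (mk fun n ↦ (#{lam ∈ Nat.Partition.distincts n | ∀ i ∈ lam.parts, p i} : R)) := by
  convert! Nat.Partition.hasProd_genFun
    (fun i c ↦ if p i ∧ c < 2 then (1 : R) else 0) using 1
  · ext1 i
    rw [tsum_eq_single 0 (by simp +contextual)]
    by_cases h : p (i + 1) <;> simp [h]
  · ext n
    simp_rw [Nat.Partition.coeff_genFun, coeff_mk, ← Nat.Partition.countRestricted_two,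
      Nat.Partition.countRestricted, filter_filter, natCast_card_filter, Finsupp.prod, prod_boole]
    refine sum_congr rfl fun lam _ ↦ if_congr ?_ rfl rfl
    simp only [Multiset.toFinsupp_support, Multiset.mem_toFinset, Multiset.toFinsupp_apply]
    grind

theorem one_add_X_pow_mul_tsum_mul_gaussFactor [IsTopologicalRing R] {i : ℕ} (hi : i ≠ 0) :
    (1 + X ^ i) * (∑' j : ℕ, X ^ (i * j)) * gaussFactor R i = 1 := by
  have geometric : (∑' j : ℕ, X ^ (i * j) : R⟦X⟧) * (1 - X ^ i) = 1 := by
    simp_rw [pow_mul]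
    exact WithPiTopology.tsum_pow_mul_one_sub_of_constantCoeff_eq_zero (by simp [hi])
  calc (1 + X ^ i) * (∑' j : ℕ, X ^ (i * j)) * gaussFactor R i
      = (∑' j : ℕ, X ^ (i * j)) * (gaussFactor R i * (1 + X ^ i)) := by ring
    _ = 1 := by rw [gaussFactor_mul_one_add_X_pow, geometric]

end

/-! ### The generating function -/

/-- The generating function of the `(j, k)`-regular overpartitions, with coefficients in `R`. -/
noncomputable def regularOverpartitionSeries (j k : ℕ) : R⟦X⟧ :=
  mk fun n ↦ (regularOverpartitions j k n : R)

theorem regularOverpartitionSeries_eq_mul (j k : ℕ) :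
    regularOverpartitionSeries R j k =
      mk (fun n ↦ (#{lam ∈ Nat.Partition.distincts n | ∀ i ∈ lam.parts, i % k ≠ j} : R)) *
        mk (fun n ↦ (#(Nat.Partition.restricted n (· % k ≠ j)) : R)) := by
  ext n
  rw [regularOverpartitionSeries, coeff_mk, regularOverpartitions, coeff_mul,
    Finset.Nat.sum_antidiagonal_eq_sum_range_succ_mk, Nat.cast_sum]
  simp only [coeff_mk, Nat.cast_mul, Nat.Partition.restricted]

theorem hasProd_regularOverpartitionSeries [TopologicalSpace R] [T2Space R] [IsTopologicalRing R]
    (j k : ℕ) :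
    HasProd (fun i ↦ if (i + 1) % k ≠ j then
      (1 + X ^ (i + 1)) * ∑' m : ℕ, X ^ ((i + 1) * m) else 1)
      (regularOverpartitionSeries R j k) := by
  rw [regularOverpartitionSeries_eq_mul]
  convert! (hasProd_powerSeriesMk_card_filter_distincts R (· % k ≠ j)).mul
    (Nat.Partition.hasProd_powerSeriesMk_card_restricted R (· % k ≠ j)) using 1
  ext1 i
  rw [ite_mul_ite, one_mul]

theorem dvd_iff_mod_two_mul_eq_or_two_mul_dvd {k n : ℕ} :
    k ∣ n ↔ n % (2 * k) = k ∨ 2 * k ∣ n := by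
  refine ⟨?_, ?_⟩
  · rintro ⟨c, rfl⟩
    rw [Nat.dvd_iff_mod_eq_zero, mul_comm 2 k, Nat.mul_mod_mul_left]
    rcases Nat.mod_two_eq_zero_or_one c with h | h <;> simp [h]
  · rintro (h | h)
    · exact (Nat.dvd_mod_iff (dvd_mul_left k 2)).mp (by rw [h])
    · exact dvd_of_mul_left_dvd h

theorem regularOverpartitionSeries_mul_rescale_mul_expand {k : ℕ} (hk : k ≠ 0) :
    regularOverpartitionSeries R k (2 * k) * rescale (-1) (ramanujanPhi R) *
        expand (2 * k) (mul_ne_zero two_ne_zero hk) (rescale (-1) (ramanujanPhi R)) =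
      expand k hk (rescale (-1) (ramanujanPhi R)) := by
  let _ : TopologicalSpace R := ⊥
  have : DiscreteTopology R := ⟨rfl⟩
  refine HasProd.unique ?_ (hasProd_ite_dvd_gaussFactor R hk)
  convert! ((hasProd_regularOverpartitionSeries R k (2 * k)).mul (hasProd_gaussFactor R)).mul
    (hasProd_ite_dvd_gaussFactor R (mul_ne_zero two_ne_zero hk)) using 1
  ext1 i
  have dvd_iff := dvd_iff_mod_two_mul_eq_or_two_mul_dvd (k := k) (n := i + 1)
  have not_dvd (h : (i + 1) % (2 * k) = k) : ¬ 2 * k ∣ i + 1 := by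
    rw [Nat.dvd_iff_mod_eq_zero]; omega
  by_cases h : (i + 1) % (2 * k) = k
  · simp [h, dvd_iff, not_dvd h]
  · simp [h, dvd_iff, one_add_X_pow_mul_tsum_mul_gaussFactor R i.succ_ne_zero]

/-! ### Dissection of `φ(-q)` modulo `4` -/

theorem coeff_X_pow_mul_expand_of_not_modEq {d : ℕ} (hd : d ≠ 0) {n s : ℕ} (h : ¬ s ≡ n [MOD d])
    (f : R⟦X⟧) : coeff n (X ^ s * expand d hd f) = 0 := by
  rw [coeff_X_pow_mul']
  split_ifs with hsn
  · exact coeff_expand_of_not_dvd d hd f fun hdvd ↦ h ((Nat.modEq_iff_dvd' hsn).mpr hdvd)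
  · rfl

theorem isSquare_four_mul_iff {n : ℕ} : IsSquare (4 * n) ↔ IsSquare n := by
  refine ⟨?_, fun h ↦ (IsSquare.sq 2).mul h⟩
  rintro ⟨x, hx⟩
  obtain ⟨y, rfl⟩ : 2 ∣ x := Nat.prime_two.dvd_of_dvd_pow (n := 2) ⟨2 * n, by linarith⟩
  exact ⟨y, by linarith⟩

theorem four_dvd_or_mod_eight_eq_one_of_isSquare {n : ℕ} (h : IsSquare n) :
    4 ∣ n ∨ n % 8 = 1 := by
  obtain ⟨x, rfl⟩ := h
  have hx : x % 8 < 8 := Nat.mod_lt _ (by norm_num)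
  rw [Nat.dvd_iff_mod_eq_zero, ← Nat.mod_mod_of_dvd (x * x) (show 4 ∣ 8 by norm_num), Nat.mul_mod]
  interval_cases x % 8 <;> simp

theorem rescale_neg_one_ramanujanPhi_eq_sub :
    rescale (-1) (ramanujanPhi R) =
      expand 4 four_ne_zero (ramanujanPhi R) -
        2 * (X * expand 8 (by norm_num) (ramanujanPsi R)) := by
  ext n
  have coeff_psi_eq_zero (h : n % 8 ≠ 1) :
      coeff n (X * expand 8 (by norm_num) (ramanujanPsi R)) = 0 := by
    rw [← pow_one X]
    exact coeff_X_pow_mul_expand_of_not_modEq R _ (fun hmod : 1 ≡ n [MOD 8] ↦ h hmod.symm) _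
  rw [coeff_rescale, map_sub, two_mul, map_add]
  by_cases h4 : 4 ∣ n
  · rw [coeff_psi_eq_zero (by omega)]
    obtain ⟨m, rfl⟩ := h4
    have even : Even (4 * m) := ⟨2 * m, by ring⟩
    rw [coeff_expand_mul, even.neg_one_pow]
    simp [ramanujanPhi, isSquare_four_mul_iff]
  rw [coeff_expand_of_not_dvd 4 _ _ h4]
  by_cases h8 : n % 8 = 1
  · obtain ⟨m, rfl⟩ : ∃ m, n = 8 * m + 1 := ⟨n / 8, by omega⟩
    have odd : Odd (8 * m + 1) := ⟨4 * m, by ring⟩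
    rw [coeff_succ_X_mul, coeff_expand_mul, odd.neg_one_pow]
    simp only [ramanujanPhi, ramanujanPsi, coeff_mk, Nat.succ_ne_zero, if_false]
    split_ifs <;> norm_num
  · have not_isSquare : ¬ IsSquare n := fun h ↦
      (four_dvd_or_mod_eight_eq_one_of_isSquare h).elim h4 h8
    have hn : n ≠ 0 := by rintro rfl; exact h4 (dvd_zero 4)
    simp [coeff_psi_eq_zero h8, ramanujanPhi, not_isSquare, hn]

/-! ### Reduction modulo `16` -/

theorem eight_mul_ramanujanPhi : 8 * ramanujanPhi (ZMod 16) = 8 := by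
  have eight_eq_C : (8 : (ZMod 16)⟦X⟧) = C 8 := (map_ofNat C 8).symm
  have sixteen_eq_zero : (8 * 2 : ZMod 16) = 0 := by decide
  ext n
  rw [eight_eq_C, coeff_C_mul, coeff_C, ramanujanPhi, coeff_mk]
  split_ifs <;> simp [sixteen_eq_zero]

theorem eight_mul_sq_eq_eight_mul_expand (f : (ZMod 16)⟦X⟧) :
    8 * f ^ 2 = 8 * expand 2 two_ne_zero f := by
  let reduce := ZMod.castHom (show 2 ∣ 16 by norm_num) (ZMod 2)
  have eight_mul_of_even : ∀ a : ZMod 16, reduce a = 0 → 8 * a = 0 := by decide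
  have map_sq : map reduce (f ^ 2) = map reduce (expand 2 two_ne_zero f) := by
    rw [map_pow, map_expand]
    have := MvPowerSeries.map_frobenius_expand 2 two_ne_zero (f := map reduce f)
    rw [ZMod.frobenius_zmod, MvPowerSeries.map_id] at this
    exact this.symm
  have eight_eq_C : (8 : (ZMod 16)⟦X⟧) = C 8 := (map_ofNat C 8).symm
  rw [← sub_eq_zero, ← mul_sub, eight_eq_C]
  ext n
  rw [coeff_C_mul, map_zero]
  refine eight_mul_of_even _ ?_
  rw [← coeff_map, map_sub, map_sq, sub_self, map_zero]

theorem eight_mul_map_eq_eight (σ : (ZMod 16)⟦X⟧ →+* (ZMod 16)⟦X⟧) {f : (ZMod 16)⟦X⟧}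
    (h : 8 * f = 8) : 8 * σ f = 8 := by
  rw [← map_ofNat σ 8, ← map_mul, h]

theorem coeff_expand_mul_geom_sum₂ {d : ℕ} (hd : d ≠ 0) (e f g : R⟦X⟧) {m r : ℕ} (hr : r < d) :
    coeff (d * m + r) (expand d hd e *
        ∑ i ∈ range d, (X * expand d hd g) ^ i * expand d hd f ^ (d - 1 - i)) =
      coeff m (e * g ^ r * f ^ (d - 1 - r)) := by
  have term_eq (i : ℕ) : expand d hd e * ((X * expand d hd g) ^ i * expand d hd f ^ (d - 1 - i)) =
      X ^ i * expand d hd (e * g ^ i * f ^ (d - 1 - i)) := by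
    simp only [map_mul, map_pow]; ring
  rw [mul_sum, map_sum, sum_eq_single_of_mem r (mem_range.mpr hr), term_eq, coeff_X_pow_mul,
    coeff_expand_mul]
  intro i hi hir
  rw [term_eq]
  refine coeff_X_pow_mul_expand_of_not_modEq R _ (fun hmod ↦ hir ?_) _
  rwa [Nat.ModEq, Nat.mul_add_mod, Nat.mod_eq_of_lt hr, Nat.mod_eq_of_lt (mem_range.mp hi)] at hmod

/-- The cofactor `a ^ 3 + a ^ 2 * c + a * c ^ 2 + c ^ 3` of `φ(-q) = a - c` in `a ^ 4 - c ^ 4`,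
where `a = φ(q ^ 4)` and `c = 2 * q * ψ(q ^ 8)`. It is written as a polynomial in `q` over the
series in `q ^ 4`, from which its coefficients in each residue class modulo `4` can be read. -/
noncomputable def ramanujanPhiCofactor : R⟦X⟧ :=
  ∑ i ∈ range 4, (X * expand 4 four_ne_zero (2 * expand 2 two_ne_zero (ramanujanPsi R))) ^ i *
    expand 4 four_ne_zero (ramanujanPhi R) ^ (4 - 1 - i)

theorem ramanujanPhiCofactor_mul_rescale_neg_one_ramanujanPhi :
    ramanujanPhiCofactor R * rescale (-1) (ramanujanPhi R) =
      expand 4 four_ne_zero (ramanujanPhi R ^ 4) -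
        16 * (X * expand 8 (by norm_num) (ramanujanPsi R)) ^ 4 := by
  have shift_eq : X * expand 4 four_ne_zero (2 * expand 2 two_ne_zero (ramanujanPsi R)) =
      2 * (X * expand 8 (by norm_num) (ramanujanPsi R)) := by
    rw [expand_mul 4 four_ne_zero 2 two_ne_zero, map_mul, map_ofNat, mul_left_comm]
  rw [ramanujanPhiCofactor, shift_eq, rescale_neg_one_ramanujanPhi_eq_sub, ← neg_sub (2 * _),
    mul_neg, geom_sum₂_mul, map_pow]
  ring

theorem regularOverpartitionSeries_mul_expand_four {l : ℕ} (hl : l ≠ 0) :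
    regularOverpartitionSeries (ZMod 16) (4 * l) (2 * (4 * l)) *
        expand 4 four_ne_zero (ramanujanPhi (ZMod 16) ^ 4 *
          expand (2 * l) (mul_ne_zero two_ne_zero hl) (rescale (-1) (ramanujanPhi (ZMod 16)))) =
      expand 4 four_ne_zero (expand l hl (rescale (-1) (ramanujanPhi (ZMod 16)))) *
        ramanujanPhiCofactor (ZMod 16) := by
  have sixteen : (16 : (ZMod 16)⟦X⟧) = 0 := by
    rw [← map_ofNat C 16, show (OfNat.ofNat 16 : ZMod 16) = 0 by decide, map_zero]
  have cofactor := ramanujanPhiCofactor_mul_rescale_neg_one_ramanujanPhi (ZMod 16)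
  rw [sixteen, zero_mul, sub_zero] at cofactor
  have product :=
    regularOverpartitionSeries_mul_rescale_mul_expand (ZMod 16) (mul_ne_zero four_ne_zero hl)
  simp only [mul_left_comm 2 4 l, expand_mul 4 four_ne_zero l hl,
    expand_mul 4 four_ne_zero (2 * l) (mul_ne_zero two_ne_zero hl)] at product ⊢
  rw [map_mul, ← cofactor, ← product]
  ring

theorem exists_regularOverpartitionSeries_eq_expand_mul {l : ℕ} (hl : l ≠ 0) :
    ∃ E : (ZMod 16)⟦X⟧, 8 * E = 8 ∧
      regularOverpartitionSeries (ZMod 16) (4 * l) (2 * (4 * l)) =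
        expand 4 four_ne_zero E * ramanujanPhiCofactor (ZMod 16) := by
  have h2l : 2 * l ≠ 0 := mul_ne_zero two_ne_zero hl
  let φ := ramanujanPhi (ZMod 16)
  let N := expand l hl (rescale (-1) φ)
  let M := expand (2 * l) h2l (rescale (-1) φ)
  have h8φ : 8 * φ = 8 := eight_mul_ramanujanPhi
  have h8φneg : 8 * rescale (-1) φ = 8 := eight_mul_map_eq_eight (rescale (-1)) h8φ
  have h8N : 8 * N = 8 := eight_mul_map_eq_eight (expand l hl).toRingHom h8φneg
  have h8M : 8 * M = 8 := eight_mul_map_eq_eight (expand (2 * l) h2l).toRingHom h8φneg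
  obtain ⟨D, hD⟩ : ∃ D, φ ^ 4 * M * D = 1 := by
    refine IsUnit.exists_right_inv (isUnit_iff_constantCoeff.mpr ?_)
    simp [M, φ, constantCoeff_ramanujanPhi, constantCoeff_rescale_ramanujanPhi]
  refine ⟨N * D, ?_, ?_⟩
  · have h8D : 8 * D = 8 := by
      linear_combination 8 * hD - (φ ^ 3 + φ ^ 2 + φ + 1) * M * D * h8φ - D * h8M
    rw [← mul_assoc, h8N, h8D]
  · have expand_hD : expand 4 four_ne_zero (φ ^ 4 * M) * expand 4 four_ne_zero D = 1 := by
      rw [← map_mul, hD, map_one]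
    rw [map_mul]
    linear_combination expand 4 four_ne_zero D * regularOverpartitionSeries_mul_expand_four hl -
      regularOverpartitionSeries (ZMod 16) (4 * l) (2 * (4 * l)) * expand_hD

theorem coeff_four_mul_add_three_regularOverpartitionSeries {l : ℕ} (hl : l ≠ 0) (m : ℕ) :
    coeff (4 * m + 3) (regularOverpartitionSeries (ZMod 16) (4 * l) (2 * (4 * l))) =
      8 * coeff m (expand 2 two_ne_zero (ramanujanPsi (ZMod 16)) *
        expand 4 four_ne_zero (ramanujanPsi (ZMod 16))) := by
  obtain ⟨E, hE, hF⟩ := exists_regularOverpartitionSeries_eq_expand_mul hl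
  set b := expand 2 two_ne_zero (ramanujanPsi (ZMod 16)) with hb
  have top_term_eq : E * (2 * b) ^ 3 * ramanujanPhi (ZMod 16) ^ (4 - 1 - 3) =
      C 8 * (b * expand 4 four_ne_zero (ramanujanPsi (ZMod 16))) :=
    calc E * (2 * b) ^ 3 * ramanujanPhi (ZMod 16) ^ (4 - 1 - 3)
        = 8 * E * b ^ 3 := by ring
      _ = b * (8 * b ^ 2) := by rw [hE]; ring
      _ = b * (8 * expand 2 two_ne_zero b) := by rw [eight_mul_sq_eq_eight_mul_expand]
      _ = C 8 * (b * expand 4 four_ne_zero (ramanujanPsi (ZMod 16))) := by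
        rw [hb, ← expand_mul, map_ofNat]
        ring
  rw [hF, ramanujanPhiCofactor, coeff_expand_mul_geom_sum₂ (ZMod 16) four_ne_zero _ _ _
    (by norm_num), top_term_eq, coeff_C_mul]

theorem exists_eq_mul_and_sq_eq_of_coeff_expand_ramanujanPsi_ne_zero {d : ℕ} (hd : d ≠ 0) {n : ℕ}
    (h : coeff n (expand d hd (ramanujanPsi R)) ≠ 0) : ∃ t x, n = d * t ∧ x ^ 2 = 8 * t + 1 := by
  obtain ⟨t, rfl⟩ : d ∣ n := by
    by_contra hdvd
    exact h (coeff_expand_of_not_dvd d hd _ hdvd)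
  rw [coeff_expand_mul, ramanujanPsi, coeff_mk, ite_ne_right_iff, isSquare_iff_exists_sq] at h
  obtain ⟨⟨x, hx⟩, -⟩ := h
  exact ⟨t, x, rfl, hx.symm⟩

theorem exists_sq_add_two_mul_sq_eq_of_coeff_ne_zero {m : ℕ}
    (h : coeff m (expand 2 two_ne_zero (ramanujanPsi R) *
      expand 4 four_ne_zero (ramanujanPsi R)) ≠ 0) :
    ∃ x y, x ^ 2 + 2 * y ^ 2 = 4 * m + 3 := by
  rw [coeff_mul] at h
  obtain ⟨⟨i, j⟩, hij, hne⟩ := exists_ne_zero_of_sum_ne_zero h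
  obtain ⟨t, x, rfl, hx⟩ :=
    exists_eq_mul_and_sq_eq_of_coeff_expand_ramanujanPsi_ne_zero R _ (left_ne_zero_of_mul hne)
  obtain ⟨u, y, rfl, hy⟩ :=
    exists_eq_mul_and_sq_eq_of_coeff_expand_ramanujanPsi_ne_zero R _ (right_ne_zero_of_mul hne)
  have hm : 2 * t + 4 * u = m := mem_antidiagonal.mp hij
  exact ⟨x, y, by omega⟩

/-! ### Numbers not represented by `x ^ 2 + d * y ^ 2` -/

theorem prime_dvd_of_dvd_sq_add_mul_sq {p d : ℕ} [Fact p.Prime] (hd : ¬ IsSquare (-d : ZMod p))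
    {x y : ℕ} (h : p ∣ x ^ 2 + d * y ^ 2) : p ∣ x ∧ p ∣ y := by
  simp only [← CharP.cast_eq_zero_iff (ZMod p) p, Nat.cast_add, Nat.cast_mul, Nat.cast_pow] at h ⊢
  have hy : (y : ZMod p) = 0 := by
    by_contra hy
    refine hd ⟨x / y, ?_⟩
    field_simp
    linear_combination -h
  exact ⟨by simpa [hy] using h, hy⟩

theorem exists_eq_prime_mul_of_sq_add_mul_sq_eq {p d : ℕ} [Fact p.Prime]
    (hd : ¬ IsSquare (-d : ZMod p)) {x y N : ℕ} (h : x ^ 2 + d * y ^ 2 = p * N) :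
    ∃ x' y', N = p * (x' ^ 2 + d * y' ^ 2) := by
  obtain ⟨⟨x', rfl⟩, ⟨y', rfl⟩⟩ := prime_dvd_of_dvd_sq_add_mul_sq hd (Dvd.intro N h.symm)
  refine ⟨x', y', Nat.eq_of_mul_eq_mul_left (Fact.out : p.Prime).pos ?_⟩
  linear_combination -h

theorem sq_add_mul_sq_ne_pow_mul {p d : ℕ} [Fact p.Prime] (hd : ¬ IsSquare (-d : ZMod p))
    {M : ℕ} (hM : ¬ p ∣ M) (b x y : ℕ) : x ^ 2 + d * y ^ 2 ≠ p ^ (2 * b + 1) * M := by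
  intro h
  induction b generalizing x y with
  | zero =>
    obtain ⟨x', y', hM'⟩ := exists_eq_prime_mul_of_sq_add_mul_sq_eq hd (N := M) (by simpa using h)
    exact hM ⟨_, hM'⟩
  | succ b ih =>
    obtain ⟨x', y', h'⟩ := exists_eq_prime_mul_of_sq_add_mul_sq_eq hd
      (N := p * (p ^ (2 * b + 1) * M)) (by rw [h]; ring)
    exact ih x' y' (Nat.eq_of_mul_eq_mul_left (Fact.out : p.Prime).pos h').symm

theorem sixteen_dvd_regularOverpartitions {k N : ℕ} (hk : k ≠ 0) (h4 : 4 ∣ k) (hN : N % 4 = 3)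
    (h : ∀ x y, x ^ 2 + 2 * y ^ 2 ≠ N) : 16 ∣ regularOverpartitions k (2 * k) N := by
  obtain ⟨l, rfl⟩ := h4
  obtain ⟨m, rfl⟩ : ∃ m, N = 4 * m + 3 := ⟨N / 4, by omega⟩
  have coeff_eq := coeff_four_mul_add_three_regularOverpartitionSeries (right_ne_zero_of_mul hk) m
  rw [regularOverpartitionSeries, coeff_mk] at coeff_eq
  rw [← ZMod.natCast_eq_zero_iff, coeff_eq]
  by_contra hne
  obtain ⟨x, y, hxy⟩ :=
    exists_sq_add_two_mul_sq_eq_of_coeff_ne_zero (ZMod 16) (right_ne_zero_of_mul hne)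
  exact h x y hxy

end RegularOverpartition

theorem stmt_15_general {k p M : ℕ} [Fact p.Prime] (hk : k ≠ 0) (h4 : 4 ∣ k)
    (hp : p % 8 = 5 ∨ p % 8 = 7) (hM : ¬ p ∣ M) (b : ℕ) (hN : p ^ (2 * b + 1) * M % 4 = 3) :
    16 ∣ regularOverpartitions k (2 * k) (p ^ (2 * b + 1) * M) := by
  have not_isSquare_neg_two : ¬ IsSquare (-(2 : ℕ) : ZMod p) := by
    have hp2 : p ≠ 2 := by omega
    rw [Nat.cast_two, ZMod.exists_sq_eq_neg_two_iff hp2]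
    omega
  exact RegularOverpartition.sixteen_dvd_regularOverpartitions hk h4 hN
    (RegularOverpartition.sq_add_mul_sq_ne_pow_mul not_isSquare_neg_two hM b)

theorem stmt_15 (n α β : ℕ) (k : ℕ) (hk : k ∈ ({0, 1, 3, 4, 5, 6} : Finset ℕ)) :
    16 ∣ regularOverpartitions 4 8
        (8 * 5 ^ (2 * α) * 7 ^ (2 * β + 1) * (7 * n + k)
          + 5 * 5 ^ (2 * α) * 7 ^ (2 * β + 1)) := by
  have fact_prime_seven : Fact (Nat.Prime 7) := ⟨by norm_num⟩
  have index_eq :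
      8 * 5 ^ (2 * α) * 7 ^ (2 * β + 1) * (7 * n + k) + 5 * 5 ^ (2 * α) * 7 ^ (2 * β + 1) =
        7 ^ (2 * β + 1) * (5 ^ (2 * α) * (8 * (7 * n + k) + 5)) := by ring
  have seven_not_dvd : ¬ 7 ∣ 5 ^ (2 * α) * (8 * (7 * n + k) + 5) := by
    have coprime : Nat.Coprime 7 (5 ^ (2 * α)) := Nat.Coprime.pow_right _ (by norm_num)
    rw [coprime.dvd_mul_left]
    simp only [Finset.mem_insert, Finset.mem_singleton] at hk
    omega
  have index_mod_four : 7 ^ (2 * β + 1) * (5 ^ (2 * α) * (8 * (7 * n + k) + 5)) % 4 = 3 := by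
    have h7 : 7 ^ (2 * β + 1) % 4 = 3 := by simp [pow_succ, pow_mul, Nat.mul_mod, Nat.pow_mod]
    have h5 : 5 ^ (2 * α) % 4 = 1 := by simp [Nat.pow_mod]
    simp [Nat.mul_mod, Nat.add_mod, h5, h7]
  rw [index_eq]
  exact stmt_15_general four_ne_zero dvd_rfl (Or.inr rfl) seven_not_dvd β index_mod_four
end

section
/- Let p ≥ 5 be a prime such that −2 is a quadratic nonresidue modulo p. Then for all integers n ≥ 0, α ≥ 0 and every j with 1 ≤ j ≤ p − 1, the number of (4,8)-regular overpartitions satisfies p̄_{4,8}( 2 · p^{2α+1} · (8(pn + j) + p) ) ≡ 0 (mod 8). -/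
/-!
Choosing which of the occurring sizes are overlined, one counts the overpartitions of `n` by the
sum of `2 ^ (number of distinct part sizes)` over the partitions of `n`. Modulo 8 only partitions
with one or two sizes matter. Let `n = 2 * m` with `m` odd, and let all forbidden parts be
multiples of 4. Then no divisor of `n` is forbidden, so one size contributes `2 * (2 * d(m))`,
where `d(m)` is the number of divisors of `m`. The number of partitions with two sizes is even:
conjugation pairs those without any restriction, a self-conjugate one having `n = c * (c + 2 * d)
≢ 2 (mod 4)`, while those with a forbidden part of size `a` and multiplicity `b` come from
factorizations of `n - a * b ≡ 2 (mod 4)`, which has an even number of divisors. So the count is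
`4 * d(m)` modulo 8, and `d(m)` is even unless `m` is a square.
-/

open Finset Nat.Partition

theorem card_modEq_two_card_filter_fixed {ι : Type*} [DecidableEq ι] {s : Finset ι} (g : ι → ι)
    (hmem : ∀ x ∈ s, g x ∈ s) (hinv : ∀ x ∈ s, g (g x) = x) :
    #s ≡ #{x ∈ s | g x = x} [MOD 2] := by
  have hmoved : Even #{x ∈ s | g x ≠ x} := by
    rw [← ZMod.natCast_eq_zero_iff_even, ← Nat.smul_one_eq_cast, ← sum_const]
    refine sum_involution (fun x _ => g x) (fun _ _ => by decide)
      (fun x hx _ => (mem_filter.1 hx).2) (fun x hx => ?_)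
      (fun x hx => hinv x (mem_filter.1 hx).1)
    obtain ⟨hxs, hne⟩ := mem_filter.1 hx
    exact mem_filter.2 ⟨hmem x hxs, by rw [hinv x hxs]; exact hne.symm⟩
  rw [← card_filter_add_card_filter_not (s := s) (fun x => g x = x)]
  exact (Nat.modEq_zero_iff_dvd.2 hmoved.two_dvd).add_left _

theorem card_divisorsAntidiagonal (n : ℕ) : #n.divisorsAntidiagonal = #n.divisors := by
  rw [← Nat.map_div_right_divisors, card_map]

theorem odd_card_divisors_iff_isSquare {n : ℕ} (hn : n ≠ 0) :
    Odd #n.divisors ↔ IsSquare n := by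
  have hparity := card_modEq_two_card_filter_fixed (s := n.divisorsAntidiagonal) Prod.swap
    (fun _ => Nat.swap_mem_divisorsAntidiagonal.2) (fun x _ => x.swap_swap)
  rw [card_divisorsAntidiagonal] at hparity
  rw [Nat.odd_iff, hparity]
  constructor
  · intro hodd
    obtain ⟨⟨a, b⟩, hx⟩ : {x ∈ n.divisorsAntidiagonal | x.swap = x}.Nonempty :=
      card_ne_zero.1 fun h => by simp [h] at hodd
    simp only [mem_filter, Nat.mem_divisorsAntidiagonal, Prod.swap_prod_mk, Prod.mk.injEq] at hx
    exact ⟨a, by rw [← hx.1.1, hx.2.1]⟩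
  · rintro ⟨r, rfl⟩
    have hfixed : {x ∈ (r * r).divisorsAntidiagonal | x.swap = x} = {(r, r)} := by
      ext ⟨a, b⟩
      simp only [mem_filter, Nat.mem_divisorsAntidiagonal, Prod.swap_prod_mk, Prod.mk.injEq,
        mem_singleton]
      constructor
      · rintro ⟨⟨hab, -⟩, rfl, -⟩
        exact ⟨Nat.mul_self_inj.1 hab, Nat.mul_self_inj.1 hab⟩
      · rintro ⟨rfl, rfl⟩
        exact ⟨⟨rfl, hn⟩, rfl, rfl⟩
    rw [hfixed, card_singleton]

theorem card_divisors_two_mul {m : ℕ} (hm : Odd m) : #(2 * m).divisors = 2 * #m.divisors := by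
  rw [(Nat.coprime_two_left.2 hm).card_divisors_mul, Nat.prime_two.divisors]
  rfl

theorem even_card_divisors_of_mod_four {n : ℕ} (hn : n % 4 = 2) : Even #n.divisors := by
  obtain ⟨m, rfl⟩ : 2 ∣ n := by omega
  rw [card_divisors_two_mul (Nat.odd_iff.2 (by omega))]
  exact even_two_mul _

theorem not_isSquare_prime_pow_mul {p e m : ℕ} (hp : p.Prime) (he : Odd e) (hm : ¬p ∣ m) :
    ¬IsSquare (p ^ e * m) := by
  rintro ⟨r, hr⟩
  have hm0 : m ≠ 0 := fun h => hm (h ▸ dvd_zero p)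
  have hpe : p ^ e ≠ 0 := pow_ne_zero e hp.ne_zero
  have hr0 : r ≠ 0 := left_ne_zero_of_mul (hr ▸ mul_ne_zero hpe hm0)
  have hval : e = r.factorization p + r.factorization p := by
    simpa [Nat.factorization_mul hpe hm0, Nat.factorization_mul hr0 hr0, hp.factorization_self,
      Nat.factorization_eq_zero_of_not_dvd hm] using congrArg (Nat.factorization · p) hr
  exact Nat.not_even_iff_odd.2 he ⟨_, hval⟩

theorem not_dvd_eight_mul_add_self {p n j : ℕ} (hp : p.Prime) (hp2 : p ≠ 2) (hj : ¬p ∣ j) :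
    ¬p ∣ 8 * (p * n + j) + p := by
  have hp8 : ¬p ∣ 2 ^ 3 := fun h => hp2 ((Nat.prime_dvd_prime_iff_eq hp Nat.prime_two).1
    (hp.dvd_of_dvd_pow h))
  rw [Nat.dvd_add_left dvd_rfl, hp.dvd_mul, Nat.dvd_add_right (dvd_mul_right p n)]
  exact not_or.2 ⟨hp8, hj⟩

theorem odd_pow_mul_eight_mul_add_self {p : ℕ} (hp : Odd p) (e i : ℕ) :
    Odd (p ^ e * (8 * i + p)) :=
  hp.pow.mul (((by decide : Even 8).mul_right i).add_odd hp)

theorem sum_two_pow_modEq_eight {ι : Type*} (s : Finset ι) (c : ι → ℕ) (hc : ∀ x ∈ s, c x ≠ 0) :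
    ∑ x ∈ s, 2 ^ c x ≡ 2 * #{x ∈ s | c x = 1} + 4 * #{x ∈ s | c x = 2} [MOD 8] := by
  have hterm : ∀ x ∈ s,
      2 ^ c x ≡ 2 * (if c x = 1 then 1 else 0) + 4 * (if c x = 2 then 1 else 0) [MOD 8] := by
    intro x hx
    obtain h | h | ⟨e, h⟩ : c x = 1 ∨ c x = 2 ∨ ∃ e, c x = e + 3 := by
      have := hc x hx
      rcases Nat.lt_or_ge (c x) 3 with h | h
      · omega
      · exact .inr (.inr ⟨_, (Nat.sub_add_cancel h).symm⟩)
    · rw [h]; rfl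
    · rw [h]; rfl
    · simp [h, pow_add, Nat.modEq_zero_iff_dvd]
  simpa only [card_filter, mul_sum, ← sum_add_distrib] using Nat.ModEq.sum hterm

theorem val_le_of_subset_toFinset {ι : Type*} [DecidableEq ι] {t : Finset ι} {s : Multiset ι}
    (h : t ⊆ s.toFinset) : t.val ≤ s :=
  val_le_iff_val_subset.2 fun _ hi => Multiset.mem_toFinset.1 (h hi)

/-- The partition of `m + k` whose parts are those of a partition of `m` together with those of
a partition of `k`. -/
def joinPartitions {m k : ℕ} (lam : m.Partition) (mu : k.Partition) : (m + k).Partition where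
  parts := lam.parts + mu.parts
  parts_pos hi := (Multiset.mem_add.1 hi).elim lam.parts_pos mu.parts_pos
  parts_sum := by rw [Multiset.sum_add, lam.parts_sum, mu.parts_sum]

theorem exists_joinPartitions_eq {m k : ℕ} (nu : (m + k).Partition) {S : Finset ℕ}
    (hS : S ⊆ nu.parts.toFinset) (hsum : S.val.sum = m) :
    ∃ (lam : m.Partition) (mu : k.Partition), joinPartitions lam mu = nu ∧ lam.parts = S.val := by
  obtain ⟨t, ht⟩ := Multiset.le_iff_exists_add.1 (val_le_of_subset_toFinset hS)
  have hpos {i : ℕ} (hi : i ∈ S.val + t) : 0 < i := nu.parts_pos (ht ▸ hi)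
  have ht_sum : t.sum = k := by
    have := nu.parts_sum
    rw [ht, Multiset.sum_add] at this
    omega
  exact ⟨⟨S.val, fun hi => hpos (Multiset.mem_add.2 (.inl hi)), hsum⟩,
    ⟨t, fun hi => hpos (Multiset.mem_add.2 (.inr hi)), ht_sum⟩, Nat.Partition.ext ht.symm, rfl⟩

section Overpartitions

variable (P : ℕ → Prop) [DecidablePred P]

theorem card_distincts_mul_card_restricted (m k : ℕ) :
    #{lam ∈ distincts m | ∀ i ∈ lam.parts, P i} * #(restricted k P) =
      #{x ∈ (restricted (m + k) P).sigma fun nu => nu.parts.toFinset.powerset |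
        x.2.val.sum = m} := by
  rw [← card_product]
  refine card_bij (fun x _ => ⟨joinPartitions x.1 x.2, x.1.parts.toFinset⟩) ?_ ?_ ?_
  · rintro ⟨lam, mu⟩ hx
    simp only [distincts, restricted, mem_product, mem_filter, mem_univ, true_and] at hx
    obtain ⟨⟨hnodup, hlam⟩, hmu⟩ := hx
    simp only [restricted, joinPartitions, mem_filter, mem_sigma, mem_univ, true_and,
      mem_powerset, Multiset.mem_add, Multiset.toFinset_add, Multiset.toFinset_val, hnodup.dedup,
      lam.parts_sum, and_true]
    exact ⟨fun i hi => hi.elim (hlam i) (hmu i), subset_union_left⟩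
  · rintro ⟨lam, mu⟩ hx ⟨lam', mu'⟩ hx' h
    simp only [distincts, mem_product, mem_filter, mem_univ, true_and] at hx hx'
    simp only [joinPartitions, Sigma.mk.injEq, Nat.Partition.mk.injEq, heq_eq_eq] at h
    obtain ⟨hparts, hover⟩ := h
    have hlam : lam.parts = lam'.parts := by
      simpa [hx.1.1.dedup, hx'.1.1.dedup] using congrArg val hover
    rw [hlam, add_right_inj] at hparts
    exact Prod.ext (Nat.Partition.ext hlam) (Nat.Partition.ext hparts)
  · rintro ⟨nu, S⟩ hx
    simp only [restricted, mem_filter, mem_sigma, mem_univ, true_and, mem_powerset] at hx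
    obtain ⟨⟨hnu, hS⟩, hsum⟩ := hx
    obtain ⟨lam, mu, rfl, hlam⟩ := exists_joinPartitions_eq nu hS hsum
    simp only [joinPartitions, Multiset.mem_add] at hnu
    refine ⟨(lam, mu), ?_, by simp only [hlam, val_toFinset]⟩
    simp only [distincts, restricted, mem_product, mem_filter, mem_univ, true_and]
    exact ⟨⟨hlam ▸ S.nodup, fun i hi => hnu i (.inl hi)⟩, fun i hi => hnu i (.inr hi)⟩

theorem sum_card_distincts_mul_card_restricted (n : ℕ) :
    ∑ m ∈ range (n + 1),
        #{lam ∈ distincts m | ∀ i ∈ lam.parts, P i} * #(restricted (n - m) P) =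
      ∑ nu ∈ restricted n P, 2 ^ #nu.parts.toFinset := by
  simp_rw [← card_powerset]
  rw [← card_sigma, card_eq_sum_card_fiberwise (f := fun x => x.2.val.sum) (t := range (n + 1))]
  · refine sum_congr rfl fun m hm => ?_
    obtain ⟨k, rfl⟩ := Nat.exists_eq_add_of_le (Nat.lt_succ_iff.1 (mem_range.1 hm))
    rw [Nat.add_sub_cancel_left, card_distincts_mul_card_restricted]
  · rintro ⟨nu, S⟩ hx
    simp only [mem_coe, mem_sigma, mem_powerset] at hx
    obtain ⟨t, ht⟩ := Multiset.le_iff_exists_add.1 (val_le_of_subset_toFinset hx.2)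
    have hsum := congrArg Multiset.sum ht
    rw [nu.parts_sum, Multiset.sum_add] at hsum
    simp only [coe_range, Set.mem_Iio]
    omega

end Overpartitions

theorem parts_toFinset_card_ne_zero {n : ℕ} (hn : n ≠ 0) (nu : n.Partition) :
    #nu.parts.toFinset ≠ 0 := by
  rw [Ne, card_eq_zero, Multiset.toFinset_eq_empty]
  intro h
  exact hn (by rw [← nu.parts_sum, h, Multiset.sum_zero])

theorem regularOverpartitions_modEq_eight (j k : ℕ) {n : ℕ} (hn : n ≠ 0) :
    regularOverpartitions j k n ≡
      2 * #{nu ∈ restricted n (· % k ≠ j) | #nu.parts.toFinset = 1} +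
      4 * #{nu ∈ restricted n (· % k ≠ j) | #nu.parts.toFinset = 2} [MOD 8] := by
  have h : regularOverpartitions j k n = _ := sum_card_distincts_mul_card_restricted (· % k ≠ j) n
  rw [h]
  exact sum_two_pow_modEq_eight _ _ fun nu _ => parts_toFinset_card_ne_zero hn nu

section Sizes

variable (P : ℕ → Prop) [DecidablePred P]

theorem card_restricted_filter_card_toFinset_eq_one {n : ℕ} (hn : n ≠ 0) :
    #{nu ∈ restricted n P | #nu.parts.toFinset = 1} = #{x ∈ n.divisorsAntidiagonal | P x.1} := by
  symm
  refine card_bij (fun x hx => ⟨Multiset.replicate x.2 x.1, fun hi => ?_, ?_⟩) ?_ ?_ ?_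
  · rw [Multiset.eq_of_mem_replicate hi]
    exact Nat.pos_of_ne_zero (Nat.left_ne_zero_of_mem_divisorsAntidiagonal (mem_filter.1 hx).1)
  · rw [Multiset.sum_replicate, smul_eq_mul, mul_comm]
    exact (Nat.mem_divisorsAntidiagonal.1 (mem_filter.1 hx).1).1
  · rintro ⟨a, b⟩ hx
    obtain ⟨hab, hPa⟩ := mem_filter.1 hx
    have hb := Nat.right_ne_zero_of_mem_divisorsAntidiagonal hab
    simp only [restricted, mem_filter, mem_univ, true_and]
    refine ⟨fun i hi => Multiset.eq_of_mem_replicate hi ▸ hPa, ?_⟩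
    rw [Multiset.toFinset_replicate, if_neg hb, card_singleton]
  · rintro ⟨a, b⟩ hx ⟨a', b'⟩ _ h
    have hb := Nat.right_ne_zero_of_mem_divisorsAntidiagonal (mem_filter.1 hx).1
    simp only [Nat.Partition.mk.injEq] at h
    obtain rfl : b = b' := by simpa using congrArg Multiset.card h
    rw [(Multiset.replicate_right_injective hb) h]
  · intro nu hnu
    simp only [restricted, mem_filter, mem_univ, true_and] at hnu
    obtain ⟨a, ha⟩ := card_eq_one.1 hnu.2
    have hmem : a ∈ nu.parts := by rw [← Multiset.mem_toFinset, ha, mem_singleton]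
    have hparts : Multiset.replicate (nu.parts.count a) a = nu.parts := by
      simpa [ha, Multiset.nsmul_singleton] using Multiset.toFinset_sum_count_nsmul_eq nu.parts
    have hsum := nu.parts_sum
    rw [← hparts, Multiset.sum_replicate, smul_eq_mul, mul_comm] at hsum
    exact ⟨(a, nu.parts.count a), mem_filter.2
      ⟨Nat.mem_divisorsAntidiagonal.2 ⟨hsum, hn⟩, hnu.1 a hmem⟩, Nat.Partition.ext hparts⟩

/-- The pairs `((a, b), (c, d))` of positive integers with `a * b + c * d = n`. For `c < a` they
encode the partitions of `n` in which exactly two sizes occur, `a` with multiplicity `b` and `c`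
with multiplicity `d`. -/
def factorPairs (n : ℕ) : Finset ((ℕ × ℕ) × (ℕ × ℕ)) :=
  (antidiagonal n).biUnion fun u => u.1.divisorsAntidiagonal ×ˢ u.2.divisorsAntidiagonal

theorem mem_factorPairs {n a b c d : ℕ} :
    ((a, b), (c, d)) ∈ factorPairs n ↔
      a * b + c * d = n ∧ a ≠ 0 ∧ b ≠ 0 ∧ c ≠ 0 ∧ d ≠ 0 := by
  simp only [factorPairs, mem_biUnion, HasAntidiagonal.mem_antidiagonal, mem_product,
    Nat.mem_divisorsAntidiagonal, Prod.exists]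
  constructor
  · rintro ⟨u, v, rfl, ⟨rfl, hab⟩, rfl, hcd⟩
    simp_all
  · rintro ⟨h, ha, hb, hc, hd⟩
    exact ⟨_, _, h, ⟨rfl, mul_ne_zero ha hb⟩, rfl, mul_ne_zero hc hd⟩

/-- The multiset of parts encoded by an element `((a, b), (c, d))` of `factorPairs`: `a` with
multiplicity `b` together with `c` with multiplicity `d`. -/
def twoSizes (x : (ℕ × ℕ) × (ℕ × ℕ)) : Multiset ℕ :=
  Multiset.replicate x.1.2 x.1.1 + Multiset.replicate x.2.2 x.2.1

theorem toFinset_twoSizes {a b c d : ℕ} (hb : b ≠ 0) (hd : d ≠ 0) :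
    (twoSizes ((a, b), (c, d))).toFinset = {a, c} := by
  rw [twoSizes, Multiset.toFinset_add, Multiset.toFinset_replicate, Multiset.toFinset_replicate,
    if_neg hb, if_neg hd]
  rfl

theorem mem_twoSizes {a b c d i : ℕ} (hb : b ≠ 0) (hd : d ≠ 0) :
    i ∈ twoSizes ((a, b), (c, d)) ↔ i = a ∨ i = c := by
  rw [← Multiset.mem_toFinset, toFinset_twoSizes hb hd, mem_insert, mem_singleton]

theorem sum_twoSizes (a b c d : ℕ) : (twoSizes ((a, b), (c, d))).sum = a * b + c * d := by
  simp only [twoSizes, Multiset.sum_add, Multiset.sum_replicate, smul_eq_mul, mul_comm]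

theorem twoSizes_injOn (n : ℕ) :
    Set.InjOn twoSizes {x | x ∈ factorPairs n ∧ x.2.1 < x.1.1} := by
  rintro ⟨⟨a, b⟩, c, d⟩ ⟨hx, hca⟩ ⟨⟨a', b'⟩, c', d'⟩ ⟨hx', hca'⟩ h
  rw [mem_factorPairs] at hx hx'
  have hcount (i : ℕ) := congrArg (Multiset.count i) h
  simp only [twoSizes, Multiset.count_add, Multiset.count_replicate] at hcount
  have hcount_a := hcount a
  have hcount_c := hcount c
  have hcount_a' := hcount a'
  have hcount_c' := hcount c'
  grind

theorem exists_twoSizes_eq_of_card_toFinset_eq_two {s : Multiset ℕ} (hs : #s.toFinset = 2) :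
    ∃ a b c d, c < a ∧ b ≠ 0 ∧ d ≠ 0 ∧ twoSizes ((a, b), (c, d)) = s := by
  obtain ⟨a, c, hca, hac⟩ : ∃ a c, c < a ∧ s.toFinset = {a, c} := by
    obtain ⟨a, c, hne, hac⟩ := card_eq_two.1 hs
    rcases lt_or_gt_of_ne hne with h | h
    · exact ⟨c, a, h, by rw [hac, pair_comm]⟩
    · exact ⟨a, c, h, hac⟩
  refine ⟨a, s.count a, c, s.count c, hca, ?_, ?_, ?_⟩
  · simp [← Multiset.mem_toFinset, hac]
  · simp [← Multiset.mem_toFinset, hac]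
  · simpa [twoSizes, hac, sum_pair hca.ne', Multiset.nsmul_singleton] using
      Multiset.toFinset_sum_count_nsmul_eq s

theorem card_restricted_filter_card_toFinset_eq_two (n : ℕ) :
    #{nu ∈ restricted n P | #nu.parts.toFinset = 2} =
      #{x ∈ factorPairs n | x.2.1 < x.1.1 ∧ P x.1.1 ∧ P x.2.1} := by
  rw [← card_image_of_injOn (f := Nat.Partition.parts) fun _ _ _ _ => Nat.Partition.ext,
    ← card_image_of_injOn (f := twoSizes) ((twoSizes_injOn n).mono fun x hx => by
      have := mem_filter.1 hx; exact ⟨this.1, this.2.1⟩)]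
  congr 1
  ext s
  simp only [restricted, mem_image, mem_filter, mem_univ, true_and, Prod.exists, mem_factorPairs]
  constructor
  · rintro ⟨nu, ⟨hP, hcard⟩, rfl⟩
    obtain ⟨a, b, c, d, hca, hb, hd, hs⟩ := exists_twoSizes_eq_of_card_toFinset_eq_two hcard
    have hpos (i : ℕ) := @Nat.Partition.parts_pos _ nu i
    simp only [← hs, mem_twoSizes hb hd, forall_eq_or_imp, forall_eq] at hP hpos
    refine ⟨a, b, c, d, ⟨⟨?_, hpos.1.ne', hb, hpos.2.ne', hd⟩, hca, hP⟩, hs⟩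
    rw [← sum_twoSizes, hs, nu.parts_sum]
  · rintro ⟨a, b, c, d, ⟨⟨hsum, ha, hb, hc, hd⟩, hca, hPa, hPc⟩, rfl⟩
    refine ⟨⟨twoSizes ((a, b), (c, d)), fun {i} hi => ?_, by rw [sum_twoSizes, hsum]⟩,
      ⟨fun i hi => ?_, ?_⟩, rfl⟩
    · rcases (mem_twoSizes hb hd).1 hi with rfl | rfl <;> omega
    · rcases (mem_twoSizes hb hd).1 hi with rfl | rfl <;> assumption
    · rw [toFinset_twoSizes hb hd, card_pair hca.ne']

end Sizes

theorem mul_add_two_mul_mod_four_ne_two (c d : ℕ) : c * (c + 2 * d) % 4 ≠ 2 := by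
  intro h
  rcases Nat.even_or_odd' c with ⟨e, rfl | rfl⟩
  · ring_nf at h; omega
  · ring_nf at h; omega

-- For `c < a`, conjugating the Young diagram of the partition with parts `a` (`b` times) and `c`
-- (`d` times) gives the parts `b + d` (`c` times) and `b` (`a - c` times).
theorem even_card_factorPairs_filter_lt {n : ℕ} (hn : n % 4 = 2) :
    Even #{x ∈ factorPairs n | x.2.1 < x.1.1} := by
  have hparity := card_modEq_two_card_filter_fixed (s := {x ∈ factorPairs n | x.2.1 < x.1.1})
    (fun x => ((x.1.2 + x.2.2, x.2.1), (x.1.2, x.1.1 - x.2.1))) ?_ ?_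
  · rw [Nat.even_iff, hparity, filter_eq_empty_iff.2, card_empty]
    rintro ⟨⟨a, b⟩, c, d⟩ hx hfixed
    simp only [mem_filter, mem_factorPairs] at hx
    simp only [Prod.mk.injEq] at hfixed
    obtain ⟨⟨rfl, rfl⟩, -⟩ := hfixed
    have hsum : c * (c + 2 * d) = n := by rw [← hx.1.1]; ring
    exact mul_add_two_mul_mod_four_ne_two c d (hsum ▸ hn)
  · rintro ⟨⟨a, b⟩, c, d⟩ hx
    simp only [mem_filter, mem_factorPairs] at hx ⊢
    obtain ⟨⟨hsum, -, hb, hc, hd⟩, hca⟩ := hx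
    obtain ⟨e, rfl⟩ := Nat.exists_eq_add_of_lt hca
    refine ⟨⟨?_, by omega, hc, hb, by omega⟩, by omega⟩
    rw [← hsum, add_assoc, Nat.add_sub_cancel_left]
    ring
  · rintro ⟨⟨a, b⟩, c, d⟩ hx
    obtain ⟨-, hca⟩ := mem_filter.1 hx
    simp only [Prod.mk.injEq, true_and, and_true] at hca ⊢
    omega

theorem card_factorPairs_filter_fst (P : ℕ → Prop) [DecidablePred P] (n : ℕ) :
    #{x ∈ factorPairs n | P x.1.1} =
      ∑ u ∈ antidiagonal n, #{y ∈ u.1.divisorsAntidiagonal | P y.1} * #u.2.divisors := by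
  rw [factorPairs, filter_biUnion, card_biUnion]
  · refine sum_congr rfl fun u _ => ?_
    rw [filter_product_left (p := fun y : ℕ × ℕ => P y.1), card_product, card_divisorsAntidiagonal]
  · intro u _ v _ huv
    refine disjoint_left.2 fun x hxu hxv => huv ?_
    simp only [mem_filter, mem_product, Nat.mem_divisorsAntidiagonal] at hxu hxv
    exact Prod.ext (hxu.1.1.1.symm.trans hxv.1.1.1) (hxu.1.2.1.symm.trans hxv.1.2.1)

section Parity

variable {P : ℕ → Prop} [DecidablePred P] {n : ℕ}

theorem even_card_factorPairs_filter_fst (hP : ∀ a, P a → 4 ∣ a) (hn : n % 4 = 2) :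
    Even #{x ∈ factorPairs n | P x.1.1} := by
  rw [card_factorPairs_filter_fst]
  refine even_sum _ fun u hu => ?_
  rw [HasAntidiagonal.mem_antidiagonal] at hu
  by_cases hdvd : 4 ∣ u.1
  · exact (even_card_divisors_of_mod_four (by omega)).mul_left _
  · rw [filter_eq_empty_iff.2, card_empty, zero_mul]
    · exact Even.zero
    · intro y hy hPy
      rw [Nat.mem_divisorsAntidiagonal] at hy
      exact hdvd (hy.1 ▸ (hP _ hPy).mul_right _)

theorem card_factorPairs_filter_lt_and_or
    (hP : ∀ x ∈ factorPairs n, P x.1.1 → ¬P x.2.1) :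
    #{x ∈ factorPairs n | x.2.1 < x.1.1 ∧ (P x.1.1 ∨ P x.2.1)} =
      #{x ∈ factorPairs n | P x.1.1} := by
  have hswap : #{x ∈ factorPairs n | x.2.1 < x.1.1 ∧ P x.2.1} =
      #{x ∈ factorPairs n | P x.1.1 ∧ ¬x.2.1 < x.1.1} := by
    refine card_nbij' Prod.swap Prod.swap ?_ ?_ (fun x _ => x.swap_swap) (fun x _ => x.swap_swap)
    · rintro ⟨⟨a, b⟩, c, d⟩ hx
      simp only [coe_filter, Set.mem_ofPred_eq, mem_factorPairs, Prod.swap_prod_mk] at hx ⊢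
      exact ⟨by omega, hx.2.2, by omega⟩
    · rintro ⟨⟨a, b⟩, c, d⟩ hx
      simp only [coe_filter, Set.mem_ofPred_eq, Prod.swap_prod_mk] at hx ⊢
      have hne : c ≠ a := fun h => hP _ hx.1 hx.2.1 (h ▸ hx.2.1)
      simp only [mem_factorPairs] at hx ⊢
      exact ⟨by omega, by omega, hx.2.1⟩
  have hdisj : Disjoint {x ∈ factorPairs n | x.2.1 < x.1.1 ∧ P x.1.1}
      {x ∈ factorPairs n | x.2.1 < x.1.1 ∧ P x.2.1} :=
    disjoint_filter.2 fun x hx h h' => hP x hx h.2 h'.2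
  simp_rw [and_or_left]
  rw [filter_or, card_union_of_disjoint hdisj, hswap]
  simp_rw [and_comm (a := _ < _)]
  rw [← filter_filter, ← filter_filter, card_filter_add_card_filter_not]

theorem even_card_factorPairs_filter_lt_and_and (hP : ∀ a, ¬P a → 4 ∣ a) (hn : n % 4 = 2) :
    Even #{x ∈ factorPairs n | x.2.1 < x.1.1 ∧ P x.1.1 ∧ P x.2.1} := by
  have hnot_both : ∀ x ∈ factorPairs n, ¬P x.1.1 → ¬¬P x.2.1 := by
    rintro ⟨⟨a, b⟩, c, d⟩ hx ha hc
    have h4 : 4 ∣ a * b + c * d := ((hP a ha).mul_right b).add ((hP c hc).mul_right d)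
    rw [mem_factorPairs] at hx
    omega
  have hbad : Even #{x ∈ factorPairs n | x.2.1 < x.1.1 ∧ ¬(P x.1.1 ∧ P x.2.1)} := by
    simp_rw [not_and_or]
    rw [card_factorPairs_filter_lt_and_or (P := fun a => ¬P a) hnot_both]
    exact even_card_factorPairs_filter_fst hP hn
  have hall := even_card_factorPairs_filter_lt hn
  rw [← card_filter_add_card_filter_not (fun x => P x.1.1 ∧ P x.2.1), filter_filter,
    filter_filter] at hall
  exact (Nat.even_add.1 hall).2 hbad

theorem filter_divisorsAntidiagonal_of_not_dvd {d : ℕ} (hP : ∀ a, ¬P a → d ∣ a) (hn : ¬d ∣ n) :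
    {x ∈ n.divisorsAntidiagonal | P x.1} = n.divisorsAntidiagonal := by
  refine filter_true_of_mem fun x hx => by_contra fun hPx => hn ?_
  exact (hP _ hPx).trans ⟨x.2, (Nat.mem_divisorsAntidiagonal.1 hx).1.symm⟩

end Parity

theorem regularOverpartitions_two_mul_modEq_eight {j k m : ℕ} (hj : 4 ∣ j) (hk : 4 ∣ k)
    (hm : Odd m) : regularOverpartitions j k (2 * m) ≡ 4 * #m.divisors [MOD 8] := by
  have hn : 2 * m % 4 = 2 := by have := Nat.odd_iff.1 hm; omega
  have hP : ∀ a, ¬a % k ≠ j → 4 ∣ a := fun a ha =>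
    (Nat.dvd_mod_iff hk).1 (not_not.1 ha ▸ hj)
  have hone : #{nu ∈ restricted (2 * m) (· % k ≠ j) | #nu.parts.toFinset = 1} =
      2 * #m.divisors := by
    rw [card_restricted_filter_card_toFinset_eq_one _ (by omega),
      filter_divisorsAntidiagonal_of_not_dvd hP (by omega), card_divisorsAntidiagonal,
      card_divisors_two_mul hm]
  have htwo : Even #{nu ∈ restricted (2 * m) (· % k ≠ j) | #nu.parts.toFinset = 2} := by
    rw [card_restricted_filter_card_toFinset_eq_two]
    exact even_card_factorPairs_filter_lt_and_and hP hn
  obtain ⟨t, ht⟩ := htwo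
  have h := regularOverpartitions_modEq_eight j k (n := 2 * m) (by omega)
  rw [hone, ht] at h
  refine h.trans ?_
  rw [Nat.ModEq]
  omega

theorem stmt_16_general {j k m : ℕ} (hj : 4 ∣ j) (hk : 4 ∣ k) (hm : Odd m) :
    8 ∣ regularOverpartitions j k (2 * m) ↔ ¬IsSquare m := by
  rw [(regularOverpartitions_two_mul_modEq_eight hj hk hm).dvd_iff dvd_rfl,
    ← odd_card_divisors_iff_isSquare hm.pos.ne', Nat.odd_iff]
  omega

theorem stmt_16 (p : ℕ) (hp : p.Prime) (hp5 : 5 ≤ p) (hns : ¬ IsSquare (-2 : ZMod p))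
    (n α : ℕ) (j : ℕ) (hj1 : 1 ≤ j) (hjp : j ≤ p - 1) :
    8 ∣ regularOverpartitions 4 8 (2 * p ^ (2 * α + 1) * (8 * (p * n + j) + p)) := by
  have hp2 : p ≠ 2 := by omega
  have hpj : ¬p ∣ j := Nat.not_dvd_of_pos_of_lt hj1 (by omega)
  rw [mul_assoc, stmt_16_general dvd_rfl (by decide)
    (odd_pow_mul_eight_mul_add_self (hp.odd_of_ne_two hp2) _ _)]
  exact not_isSquare_prime_pow_mul hp (odd_two_mul_add_one α)
    (not_dvd_eight_mul_add_self hp hp2 hpj)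
end

section
/- Let p ≥ 5 be a prime. Then for all integers n ≥ 0, α ≥ 0 and every j with 1 ≤ j ≤ p − 1, the number of (6,12)-regular overpartitions satisfies p̄_{6,12}( p^{2α+1} · (24(pn + j) + p) ) ≡ 0 (mod 4). -/
/-!
Merging the overlined and non-overlined parts turns an overpartition into a partition in which each
distinct part size may or may not have one overlined copy. Overpartitions of `n` are thus counted by
`∑ 2 ^ (number of distinct part sizes)` over the partitions of `n`. Modulo `4` only the partitions
with a single part size `d` survive, each contributing `2`, and these correspond to the divisors `d`
of `n`. When `n` is odd and `j`, `k` are even, the congruence condition on the parts excludes no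
divisor, so `4` divides the count exactly when `n` has an even number of divisors, that is, when
some prime occurs in `n` to an odd power.
-/

open Finset PowerSeries
open Nat.Partition (genFun coeff_genFun hasProd_genFun distincts)

section GenFun

open scoped PowerSeries.WithPiTopology

variable {R : Type*} [CommRing R]

theorem hasSum_expand_mk [TopologicalSpace R] (f : ℕ → R) {i : ℕ} (hi : i ≠ 0) :
    HasSum (fun c ↦ f c • (X : R⟦X⟧) ^ (i * c)) (expand i hi (mk f)) := by
  have hzero (n : ℕ) (hn : n ∉ Set.range (i * ·)) :
      monomial n (coeff n (expand i hi (mk f))) = 0 := by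
    rw [coeff_expand_of_not_dvd i hi _ fun ⟨c, hc⟩ ↦ hn ⟨c, hc.symm⟩, map_zero]
  refine (((mul_right_injective₀ hi).hasSum_iff hzero).2 (hasSum_of_monomials_self _)).congr_fun
    fun c ↦ ?_
  simp [X_pow_eq, ← map_smul]

theorem one_add_tsum_eq_expand_mk [TopologicalSpace R] [T2Space R] [IsTopologicalRing R]
    {f : ℕ → R} (hf : f 0 = 1) {i : ℕ} (hi : i ≠ 0) :
    1 + ∑' c, f (c + 1) • (X : R⟦X⟧) ^ (i * (c + 1)) = expand i hi (mk f) := by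
  have hsum := hasSum_expand_mk f hi
  rw [← hsum.tsum_eq, hsum.summable.tsum_eq_zero_add, hf]
  simp

-- `genFun f` never evaluates `f i 0`; normalizing it to `1` makes the `i`-th factor of the Euler
-- product equal to `∑ c, f i c * X ^ (i * c)`, so that factors multiply by convolution in `c`.
theorem genFun_mul_genFun {f g : ℕ → ℕ → R} (hf : ∀ i, f i 0 = 1) (hg : ∀ i, g i 0 = 1) :
    genFun f * genFun g = genFun fun i c ↦ ∑ x ∈ antidiagonal c, f i x.1 * g i x.2 := by
  let _ : TopologicalSpace R := ⊥
  have _ : DiscreteTopology R := ⟨rfl⟩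
  refine ((hasProd_genFun f).mul (hasProd_genFun g)).unique <|
    (hasProd_genFun _).congr_fun fun i ↦ ?_
  rw [one_add_tsum_eq_expand_mk (hf _) i.succ_ne_zero,
    one_add_tsum_eq_expand_mk (hg _) i.succ_ne_zero,
    one_add_tsum_eq_expand_mk (f := fun c ↦ ∑ x ∈ antidiagonal c, f (i + 1) x.1 * g (i + 1) x.2)
      (by simp [hf, hg]) i.succ_ne_zero, ← map_mul]
  congr 1
  ext c
  simp [coeff_mul]

theorem coeff_genFun_eq_sum_pow_card_toFinset {f : ℕ → ℕ → R} {A : ℕ → ℕ → Prop}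
    [∀ i, DecidablePred (A i)] {a : R} (hf : ∀ i c, c ≠ 0 → f i c = if A i c then a else 0)
    (n : ℕ) :
    coeff n (genFun f) =
      ∑ q : n.Partition with ∀ i ∈ q.parts, A i (q.parts.count i), a ^ #q.parts.toFinset := by
  rw [coeff_genFun, sum_filter]
  refine sum_congr rfl fun q _ ↦ ?_
  have hprod : q.parts.toFinsupp.prod f =
      ∏ i ∈ q.parts.toFinset, if A i (q.parts.count i) then a else 0 :=
    prod_congr rfl fun i hi ↦ hf i _ (by simpa using hi)
  simp [hprod, prod_ite_zero]

end GenFun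

section Overpartitions

variable (P : ℕ → Prop) [DecidablePred P]

theorem sum_antidiagonal_ite_mul_ite (i : ℕ) {c : ℕ} (hc : c ≠ 0) :
    ∑ x ∈ antidiagonal c, (if x.1 = 0 ∨ P i ∧ x.1 = 1 then 1 else 0) *
      (if x.2 = 0 ∨ P i then 1 else 0) = if P i then (2 : ℤ) else 0 := by
  obtain ⟨c, rfl⟩ := Nat.exists_eq_add_one_of_ne_zero hc
  rw [Finset.Nat.sum_antidiagonal_eq_sum_range_succ_mk, sum_range_succ', sum_range_succ']
  by_cases hP : P i <;> simp [hP]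

theorem sum_card_distincts_mul_card_eq_sum_two_pow (n : ℕ) :
    ∑ m ∈ range (n + 1), #{q ∈ distincts m | ∀ i ∈ q.parts, P i} *
        #{q : (n - m).Partition | ∀ i ∈ q.parts, P i} =
      ∑ q : n.Partition with ∀ i ∈ q.parts, P i, 2 ^ #q.parts.toFinset := by
  let distinctWeight (i c : ℕ) : ℤ := if c = 0 ∨ P i ∧ c = 1 then 1 else 0
  let weight (i c : ℕ) : ℤ := if c = 0 ∨ P i then 1 else 0
  have hdistinct (m : ℕ) : (#{q ∈ distincts m | ∀ i ∈ q.parts, P i} : ℤ) =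
      coeff m (genFun distinctWeight) := by
    rw [coeff_genFun_eq_sum_pow_card_toFinset (A := fun i c ↦ P i ∧ c = 1) (a := 1)
      fun i c hc ↦ by simp [distinctWeight, hc]]
    simp only [one_pow, sum_const, nsmul_one, distincts, filter_filter, forall_and,
      Multiset.nodup_iff_count_eq_one, and_comm]
  have hall (m : ℕ) : (#{q : m.Partition | ∀ i ∈ q.parts, P i} : ℤ) =
      coeff m (genFun weight) := by
    rw [coeff_genFun_eq_sum_pow_card_toFinset (A := fun i _ ↦ P i) (a := 1)
      fun i c hc ↦ by simp [weight, hc]]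
    simp
  have hmul := congrArg (coeff n) (genFun_mul_genFun (f := distinctWeight) (g := weight)
    (fun _ ↦ by simp [distinctWeight]) (fun _ ↦ by simp [weight]))
  rw [coeff_genFun_eq_sum_pow_card_toFinset (A := fun i _ ↦ P i)
      fun i c hc ↦ sum_antidiagonal_ite_mul_ite P i hc,
    coeff_mul, Finset.Nat.sum_antidiagonal_eq_sum_range_succ_mk] at hmul
  simp only [← hdistinct, ← hall] at hmul
  exact_mod_cast hmul

/-- The partition of `n` into `n / d` equal parts `d`. -/
def equalParts {d n : ℕ} (hn : n ≠ 0) (hd : d ∣ n) : n.Partition where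
  parts := Multiset.replicate (n / d) d
  parts_pos hi := Multiset.eq_of_mem_replicate hi ▸ Nat.pos_of_dvd_of_pos hd hn.bot_lt
  parts_sum := by simp [Nat.div_mul_cancel hd]

theorem toFinset_parts_equalParts {d n : ℕ} (hn : n ≠ 0) (hd : d ∣ n) :
    (equalParts hn hd).parts.toFinset = {d} := by
  have hnd : n / d ≠ 0 := (Nat.div_ne_zero_iff_of_dvd hd).2 ⟨hn, ne_zero_of_dvd_ne_zero hn hd⟩
  exact Multiset.toFinset_replicate _ _ |>.trans (if_neg hnd)

theorem exists_eq_equalParts {n : ℕ} (hn : n ≠ 0) {q : n.Partition}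
    (hq : #q.parts.toFinset = 1) : ∃ (d : ℕ) (hd : d ∣ n), q = equalParts hn hd := by
  obtain ⟨hcard, d, hparts⟩ := (Multiset.toFinset_card_eq_one_iff _).1 hq
  rw [Multiset.nsmul_singleton] at hparts
  have hsum : q.parts.card * d = n := by
    rw [← smul_eq_mul, ← Multiset.sum_replicate, ← hparts, q.parts_sum]
  have hd0 : 0 < d := q.parts_pos (hparts ▸ Multiset.mem_replicate.2 ⟨hcard, rfl⟩)
  refine ⟨d, Dvd.intro_left _ hsum, Nat.Partition.ext ?_⟩
  exact hparts.trans (congrArg (Multiset.replicate · d) (Nat.eq_div_of_mul_eq_left hd0.ne' hsum))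

theorem card_filter_card_toFinset_eq_one {n : ℕ} (hn : n ≠ 0) :
    #{q : n.Partition | (∀ i ∈ q.parts, P i) ∧ #q.parts.toFinset = 1} =
      #{d ∈ n.divisors | P d} := by
  have hdvd {d : ℕ} (hd : d ∈ {d ∈ n.divisors | P d}) : d ∣ n :=
    Nat.dvd_of_mem_divisors (mem_filter.1 hd).1
  symm
  refine card_bij (fun d hd ↦ equalParts hn (hdvd hd)) (fun d hd ↦ ?_) (fun d hd e he h ↦ ?_)
    fun q hq ↦ ?_
  · simp only [mem_filter_univ, ← Multiset.mem_toFinset, toFinset_parts_equalParts]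
    simpa using (mem_filter.1 hd).2
  · simpa [toFinset_parts_equalParts] using congrArg (·.parts.toFinset) h
  · obtain ⟨hP, hcard⟩ := mem_filter_univ _ |>.1 hq
    obtain ⟨d, hd, rfl⟩ := exists_eq_equalParts hn hcard
    have hPd : P d := hP d <| by
      simp [← Multiset.mem_toFinset, toFinset_parts_equalParts]
    exact ⟨d, mem_filter.2 ⟨Nat.mem_divisors.2 ⟨hd, hn⟩, hPd⟩, rfl⟩

theorem two_pow_modEq_ite {c : ℕ} (hc : c ≠ 0) : 2 ^ c ≡ if c = 1 then 2 else 0 [MOD 4] := by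
  obtain _ | _ | c := c
  · contradiction
  · rfl
  · exact Nat.modEq_zero_iff_dvd.2 (pow_dvd_pow 2 (Nat.le_add_left 2 c))

theorem sum_two_pow_card_toFinset_modEq {n : ℕ} (hn : n ≠ 0) :
    ∑ q : n.Partition with ∀ i ∈ q.parts, P i, 2 ^ #q.parts.toFinset ≡
      2 * #{d ∈ n.divisors | P d} [MOD 4] := by
  have hcard (q : n.Partition) : #q.parts.toFinset ≠ 0 := by
    rw [card_ne_zero, Multiset.toFinset_nonempty]
    intro hq
    exact hn (by rw [← q.parts_sum, hq, Multiset.sum_zero])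
  calc
    _ ≡ ∑ q : n.Partition with ∀ i ∈ q.parts, P i, if #q.parts.toFinset = 1 then 2 else 0 [MOD 4] :=
      Nat.ModEq.sum fun q _ ↦ two_pow_modEq_ite (hcard q)
    _ = 2 * #{d ∈ n.divisors | P d} := by
      rw [← sum_filter, sum_const, filter_filter, card_filter_card_toFinset_eq_one P hn,
        smul_eq_mul, mul_comm]

end Overpartitions

theorem regularOverpartitions_modEq (j k : ℕ) {n : ℕ} (hn : n ≠ 0) :
    regularOverpartitions j k n ≡ 2 * #{d ∈ n.divisors | d % k ≠ j} [MOD 4] := by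
  rw [regularOverpartitions, sum_card_distincts_mul_card_eq_sum_two_pow fun i ↦ i % k ≠ j]
  exact sum_two_pow_card_toFinset_modEq _ hn

theorem even_card_divisors_iff {n : ℕ} (hn : n ≠ 0) :
    Even #n.divisors ↔ ∃ p, Odd (n.factorization p) := by
  simp only [Nat.card_divisors hn, even_iff_two_dvd, Nat.prime_two.prime.dvd_finsetProd_iff]
  simp only [← even_iff_two_dvd, Nat.even_add_one, Nat.not_even_iff_odd]
  refine ⟨fun ⟨p, _, hp⟩ ↦ ⟨p, hp⟩, fun ⟨p, hp⟩ ↦ ⟨p, ?_, hp⟩⟩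
  exact Nat.support_factorization n ▸ Finsupp.mem_support_iff.2 hp.pos.ne'

theorem filter_divisors_mod_ne_of_odd {j k n : ℕ} (hj : Even j) (hk : Even k) (hn : Odd n) :
    {d ∈ n.divisors | d % k ≠ j} = n.divisors := by
  refine filter_true_of_mem fun d hd hdj ↦ Nat.not_even_iff_odd.2 ?_ hj
  exact hdj ▸ (hn.of_dvd_nat (Nat.dvd_of_mem_divisors hd)).mod_even hk

theorem stmt_17_general {j k n : ℕ} (hj : Even j) (hk : Even k) (hn : Odd n) :
    4 ∣ regularOverpartitions j k n ↔ ∃ p, Odd (n.factorization p) := by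
  have hn0 : n ≠ 0 := hn.pos.ne'
  rw [(regularOverpartitions_modEq j k hn0).dvd_iff dvd_rfl,
    filter_divisors_mod_ne_of_odd hj hk hn, ← even_card_divisors_iff hn0, even_iff_two_dvd]
  exact Nat.mul_dvd_mul_iff_left (a := 2) (b := 2) two_pos

theorem not_dvd_twentyFour_mul_add {p : ℕ} (hp : p.Prime) (hp5 : 5 ≤ p) (n : ℕ) {j : ℕ}
    (hj : ¬ p ∣ j) : ¬ p ∣ 24 * (p * n + j) + p := by
  have h24 : ¬ p ∣ 2 ^ 3 * 3 := fun h ↦ by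
    rcases hp.dvd_mul.1 h with h | h
    · exact absurd (Nat.le_of_dvd two_pos (hp.dvd_of_dvd_pow h)) (by omega)
    · exact absurd (Nat.le_of_dvd three_pos h) (by omega)
  rw [Nat.dvd_add_self_right, hp.dvd_mul, Nat.dvd_add_right (dvd_mul_right p n)]
  exact not_or.2 ⟨h24, hj⟩

theorem stmt_17 (p : ℕ) (hp : p.Prime) (hp5 : 5 ≤ p)
    (n α : ℕ) (j : ℕ) (hj1 : 1 ≤ j) (hjp : j ≤ p - 1) :
    4 ∣ regularOverpartitions 6 12 (p ^ (2 * α + 1) * (24 * (p * n + j) + p)) := by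
  have hodd : Odd p := hp.odd_of_ne_two (by omega)
  have hNodd : Odd (p ^ (2 * α + 1) * (24 * (p * n + j) + p)) :=
    hodd.pow.mul (Even.add_odd ((by decide : Even 24).mul_right _) hodd)
  have hndvd : ¬ p ∣ 24 * (p * n + j) + p :=
    not_dvd_twentyFour_mul_add hp hp5 n (Nat.not_dvd_of_pos_of_lt hj1 (by omega))
  refine (stmt_17_general (by decide) (by decide) hNodd).2 ⟨p, α, ?_⟩
  rw [Nat.factorization_mul (pow_ne_zero _ hp.ne_zero) (by positivity)]
  simp [hp.factorization_self, Nat.factorization_eq_zero_of_not_dvd hndvd]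
end
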